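/- Let f : 𝔹 → ℂ be holomorphic, F(x) = f(x)·x for x ∈ 𝔹, with F(0) = 0 and DF(0) = I (equivalently f(0) = 1). Assume F is biholomorphic on 𝔹. Then for every s ≥ 1 and every w ∈ X with ‖w‖ = 1, ‖(1/s!)·DˢF(0)(w,…,w)‖ ≤ s. -/

import Mathlib

/-!
For a unit vector `w`, the map `x ↦ f x • x` sends the complex line through `w` into itself, so
`ζ ↦ ζ * f (ζ • w)` is univalent on the disc, and its `s`-th Taylor coefficient times `w` is the
homogeneous part of degree `s` evaluated at `w`. The bound is therefore de Branges' theorem.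

De Branges' argument is carried out with Loewner's differential equation replaced by small discrete
steps. After dilation and rescaling, a univalent function is a self-map of the disc of the form
`z * exp (-p z)`. As long as an injective self-map `ψ` has `|ψ'(0)| < 1`, it omits points close to
the unit circle, and Koebe's square-root transform at such a point splits off a factor close to
the identity. Composing with this factor changes the weighted sum `∑ τ_k (k |p_k|² - 4 / k)` by a
first-order term plus a quadratic error. By the Herglotz representation the first-order term need
only be examined for the kernels `(1 + κ z) / (1 - κ z)` with `|κ| = 1`, and there it is nonpositive
because de Branges' weights decrease in time. Since the steps can be taken arbitrarily small, the
total error is negligible, which is Milin's inequality; the Lebedev–Milin inequality turns it into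
the coefficient bound.

The weights decrease because, with `y = exp (-t)`, the functions `-τ_k' / k` are Fourier
coefficients of `U_n (1 - y + y cos φ)`. The argument of `U_n` is half the trace of `G D G⁻¹ D⁻¹`
for a rotation `G` with `sin² = y` and a diagonal `D` with `D₀₀ / D₁₁ = exp (i φ)`, so `U_n` of it
is a trace on a symmetric power, whose Fourier coefficients are sums of squared matrix entries with
positive factors.
-/

open Metric Set

noncomputable section

/-- A holomorphic map is biholomorphic on an open set `s` if it is holomorphic and injective
on `s` and admits a holomorphic inverse on the image `f '' s`. -/
def IsBiholoOn {E₁ E₂ : Type*} [NormedAddCommGroup E₁] [NormedSpace ℂ E₁]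
    [NormedAddCommGroup E₂] [NormedSpace ℂ E₂] (f : E₁ → E₂) (s : Set E₁) : Prop :=
  DifferentiableOn ℂ f s ∧ Set.InjOn f s ∧
    ∃ g : E₂ → E₁, DifferentiableOn ℂ g (f '' s) ∧ ∀ x ∈ s, g (f x) = x

section SymmetricPower

open Polynomial Finset.Nat
open Finset.HasAntidiagonal (antidiagonal)

variable {R S : Type*} [CommRing R] [CommRing S]

/-- The row of index `p.1` of the `(p.1 + p.2)`-th symmetric power of a `2 × 2` matrix, as the
polynomial whose coefficients are the entries of that row: the monomial basis of binary forms is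
indexed by the antidiagonal of the degree, and dehomogenized. -/
def symPowRow (M : Matrix (Fin 2) (Fin 2) R) (p : ℕ × ℕ) : R[X] :=
  (C (M 0 0) * X + C (M 0 1)) ^ p.1 * (C (M 1 0) * X + C (M 1 1)) ^ p.2

theorem symPowRow_succ_fst (M : Matrix (Fin 2) (Fin 2) R) (i l : ℕ) :
    symPowRow M (i + 1, l) = (C (M 0 0) * X + C (M 0 1)) * symPowRow M (i, l) := by
  simp only [symPowRow]; ring

theorem symPowRow_succ_snd (M : Matrix (Fin 2) (Fin 2) R) (i l : ℕ) :
    symPowRow M (i, l + 1) = (C (M 1 0) * X + C (M 1 1)) * symPowRow M (i, l) := by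
  simp only [symPowRow]; ring

theorem coeff_linear_mul_succ (a b : R) (P : R[X]) (i : ℕ) :
    ((C a * X + C b) * P).coeff (i + 1) = a * P.coeff i + b * P.coeff (i + 1) := by
  rw [add_mul, mul_assoc, coeff_add, coeff_C_mul, coeff_X_mul, coeff_C_mul]

theorem natDegree_linear_pow_le (a b : R) (n : ℕ) : ((C a * X + C b) ^ n).natDegree ≤ n := by
  simpa using natDegree_pow_le_of_le n (natDegree_linear_le (a := a) (b := b))

theorem natDegree_symPowRow_le (M : Matrix (Fin 2) (Fin 2) R) (p : ℕ × ℕ) :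
    (symPowRow M p).natDegree ≤ p.1 + p.2 :=
  natDegree_mul_le_of_le (natDegree_linear_pow_le _ _ _) (natDegree_linear_pow_le _ _ _)

theorem map_symPowRow (φ : R →+* S) (M : Matrix (Fin 2) (Fin 2) R) (p : ℕ × ℕ) :
    (symPowRow M p).map φ = symPowRow (φ.mapMatrix M) p := by
  simp [symPowRow]

theorem aeval_homogenize_linear (a b : R) {m : ℕ} (hm : 1 ≤ m) (N : Fin 2 → R[X]) :
    MvPolynomial.aeval N ((C a * X + C b).homogenize m)
      = (C a * N 0 + C b * N 1) * N 1 ^ (m - 1) := by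
  obtain ⟨m, rfl⟩ := Nat.exists_eq_add_of_le' hm
  rw [homogenize_add, homogenize_C_mul, homogenize_X (by omega), homogenize_C]
  simp only [map_add, map_mul, map_pow, MvPolynomial.aeval_C, MvPolynomial.aeval_X,
    algebraMap_eq, Nat.add_sub_cancel]
  ring

theorem aeval_homogenize_linear_pow (a b : R) (N : Fin 2 → R[X]) (i : ℕ) :
    MvPolynomial.aeval N (((C a * X + C b) ^ i).homogenize i) = (C a * N 0 + C b * N 1) ^ i := by
  have h := homogenize_finsetProd (s := Finset.range i) (p := fun _ => C a * X + C b)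
    (n := fun _ => 1) fun _ _ => natDegree_linear_le
  simp only [Finset.prod_const, Finset.card_range, Finset.sum_const, smul_eq_mul, mul_one] at h
  rw [h, map_pow, aeval_homogenize_linear a b le_rfl, Nat.sub_self, pow_zero, mul_one]

theorem symPowRow_mul (M N : Matrix (Fin 2) (Fin 2) R) (p : ℕ × ℕ) :
    symPowRow (M * N) p = ∑ q ∈ antidiagonal (p.1 + p.2),
      C ((symPowRow M p).coeff q.1) * symPowRow N q := by
  have h := congrArg
    (MvPolynomial.aeval ![C (N 0 0) * X + C (N 0 1), C (N 1 0) * X + C (N 1 1)])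
    (homogenize_mul _ _ (natDegree_linear_pow_le (M 0 0) (M 0 1) p.1)
      (natDegree_linear_pow_le (M 1 0) (M 1 1) p.2))
  rw [map_mul, aeval_homogenize_linear_pow, aeval_homogenize_linear_pow, homogenize, map_sum] at h
  calc symPowRow (M * N) p
      = (C (M 0 0) * (C (N 0 0) * X + C (N 0 1)) + C (M 0 1) * (C (N 1 0) * X + C (N 1 1))) ^ p.1
        * (C (M 1 0) * (C (N 0 0) * X + C (N 0 1))
          + C (M 1 1) * (C (N 1 0) * X + C (N 1 1))) ^ p.2 := by
        simp only [symPowRow, Matrix.mul_apply, Fin.sum_univ_two, C_add, C_mul]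
        congr 2 <;> ring
    _ = _ := h.symm
    _ = _ := Finset.sum_congr rfl fun q _ => by
        rw [MvPolynomial.aeval_monomial, Finsupp.prod_fintype _ _ (by simp)]
        simp [symPowRow]

theorem coeff_linear_pow (a b : R) (i l : ℕ) :
    ((C a * X + C b) ^ (i + l)).coeff i = ((i + l).choose i : R) * (a ^ i * b ^ l) := by
  have hterm (j : ℕ) : (C a * X) ^ j * C b ^ (i + l - j) * ((i + l).choose j : R[X])
      = C (((i + l).choose j : R) * (a ^ j * b ^ (i + l - j))) * X ^ j := by
    simp only [mul_pow, C_mul, C_pow, map_natCast]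
    ring
  simp only [add_pow, hterm, finsetSum_coeff, coeff_C_mul_X_pow]
  rw [Finset.sum_ite_eq, if_pos (Finset.mem_range.2 (by omega)), Nat.add_sub_cancel_left]

theorem coeff_coeff_swap (P : R[X][X]) (i j : ℕ) :
    ((Bivariate.swap P).coeff i).coeff j = (P.coeff j).coeff i := by
  induction P using Polynomial.induction_on' with
  | add P Q hP hQ => simp only [map_add, coeff_add, hP, hQ]
  | monomial n P =>
    induction P using Polynomial.induction_on' with
    | add P Q hP hQ => simp only [map_add, coeff_add, hP, hQ]
    | monomial m r =>
      rw [Bivariate.swap_monomial_monomial, coeff_monomial, coeff_monomial]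
      split_ifs <;> simp_all [coeff_monomial]

theorem choose_mul_coeff_symPowRow_transpose (M : Matrix (Fin 2) (Fin 2) R) {p q : ℕ × ℕ}
    (h : p.1 + p.2 = q.1 + q.2) :
    ((p.1 + p.2).choose p.1 : R) * (symPowRow M p).coeff q.1
      = (q.1 + q.2).choose q.1 * (symPowRow M.transpose q).coeff p.1 := by
  -- Both sides are coefficients of the bivariate form `(M₀₀ X Y + M₀₁ Y + M₁₀ X + M₁₁) ^ n`.
  have hswap : Bivariate.swap
      ((C (C (M 0 0) * X + C (M 0 1)) * X + C (C (M 1 0) * X + C (M 1 1))) ^ (p.1 + p.2))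
      = (C (C (M 0 0) * X + C (M 1 0)) * X + C (C (M 0 1) * X + C (M 1 1))) ^ (q.1 + q.2) := by
    rw [h, map_pow]
    congr 1
    simp only [map_add, map_mul, Bivariate.swap_C_C, Bivariate.swap_X, Bivariate.swap_Y]
    ring
  have hcoeff := congrArg (fun P => (P.coeff q.1).coeff p.1) hswap
  simp only [coeff_coeff_swap] at hcoeff
  rw [coeff_linear_pow, coeff_linear_pow, ← C_eq_natCast, ← C_eq_natCast, coeff_C_mul,
    coeff_C_mul] at hcoeff
  exact hcoeff

theorem coeff_symPowRow_conj_diagonal (a b c d : R) {u v : R} (huv : u * v = 1) (p : ℕ × ℕ)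
    (j : ℕ) :
    (symPowRow !![a, u * b; v * c, d] p).coeff j
      = u ^ p.1 * v ^ j * (symPowRow !![a, b; c, d] p).coeff j := by
  have huv' : (C u * C v : R[X]) = 1 := by rw [← C_mul, huv, C_1]
  have h : symPowRow !![a, u * b; v * c, d] p
      = C (u ^ p.1) * (symPowRow !![a, b; c, d] p).comp (C v * X) := by
    have hrow : (C a * X + C (u * b) : R[X]) = C u * (C a * (C v * X) + C b) := by
      rw [C_mul]
      linear_combination (-C a * X) * huv'
    simp only [symPowRow, Matrix.of_apply, Matrix.cons_val', Matrix.cons_val_zero,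
      Matrix.cons_val_fin_one, Matrix.cons_val_one, mul_comp, pow_comp, add_comp, C_comp, X_comp]
    rw [hrow, mul_pow, C_mul, C_pow]
    ring
  rw [h, coeff_C_mul, comp_C_mul_X_coeff]
  ring

/-- The sum of the entries on the `m`-th superdiagonal of the `n`-th symmetric power of `M`;
for `m = 0` this is the trace. -/
def symPowShiftedTrace (M : Matrix (Fin 2) (Fin 2) R) (m n : ℕ) : R :=
  ∑ p ∈ antidiagonal n, (symPowRow M p).coeff (p.1 + m)

theorem symPowShiftedTrace_zero_succ (M : Matrix (Fin 2) (Fin 2) R) (n : ℕ) :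
    symPowShiftedTrace M 0 (n + 1)
      = M 1 1 ^ (n + 1) + M 0 0 * symPowShiftedTrace M 0 n + M 0 1 * symPowShiftedTrace M 1 n := by
  simp only [symPowShiftedTrace, sum_antidiagonal_succ, Finset.mul_sum]
  rw [add_assoc, ← Finset.sum_add_distrib]
  congr 1
  · simp [symPowRow, coeff_zero_eq_eval_zero]
  · exact Finset.sum_congr rfl fun p _ => by
      rw [symPowRow_succ_fst, ← coeff_linear_mul_succ, add_right_comm]

theorem symPowShiftedTrace_one_succ (M : Matrix (Fin 2) (Fin 2) R) (n : ℕ) :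
    symPowShiftedTrace M 1 (n + 1)
      = M 1 0 * symPowShiftedTrace M 0 n + M 1 1 * symPowShiftedTrace M 1 n := by
  have hlast : (symPowRow M (n + 1, 0)).coeff (n + 1 + 1) = 0 :=
    coeff_eq_zero_of_natDegree_lt ((natDegree_symPowRow_le M _).trans_lt (by simp))
  simp only [symPowShiftedTrace, sum_antidiagonal_succ', Finset.mul_sum, hlast, zero_add]
  rw [← Finset.sum_add_distrib]
  exact Finset.sum_congr rfl fun p _ => by
    rw [symPowRow_succ_snd, ← coeff_linear_mul_succ, add_zero]

theorem symPowShiftedTrace_eq_eval_chebyshev (M : Matrix (Fin 2) (Fin 2) R) (hM : M.det = 1)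
    (n : ℕ) : symPowShiftedTrace M 0 n = (Chebyshev.S R n).eval M.trace := by
  rw [Matrix.det_fin_two] at hM
  rw [Matrix.trace_fin_two]
  induction n using Nat.twoStepInduction with
  | zero => simp [symPowShiftedTrace, symPowRow]
  | one => simp [symPowShiftedTrace, symPowRow, antidiagonal_succ, add_comm]
  | more n ih₁ ih₂ =>
    push_cast at ih₂ ⊢
    rw [Chebyshev.S_add_two, eval_sub, eval_mul, eval_X, ← ih₁, ← ih₂,
      symPowShiftedTrace_zero_succ M (n + 1), symPowShiftedTrace_one_succ]
    linear_combination (-symPowShiftedTrace M 0 n) * hM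
      - M 1 1 * symPowShiftedTrace_zero_succ M n

end SymmetricPower

section ChebyshevFourier

open Polynomial
open scoped LaurentPolynomial
open Finset.HasAntidiagonal (antidiagonal)

/-- The polynomial in `y` whose value is the coefficient of `e ^ (i k φ)` in the Chebyshev
polynomial `U_n (1 - y + y cos φ)`. Up to the factor `-k`, these are the
time derivatives of de Branges' weights. -/
def chebyshevFourier : ℕ → ℤ → ℝ[X]
  | 0, k => if k = 0 then 1 else 0
  | 1, k => if k = 0 then 2 * (1 - X) else if k = 1 ∨ k = -1 then X else 0
  | n + 2, k => 2 * (1 - X) * chebyshevFourier (n + 1) k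
      + X * (chebyshevFourier (n + 1) (k + 1) + chebyshevFourier (n + 1) (k - 1))
      - chebyshevFourier n k

theorem chebyshevFourier_add_two (n : ℕ) (k : ℤ) :
    chebyshevFourier (n + 2) k = 2 * (1 - X) * chebyshevFourier (n + 1) k
      + X * (chebyshevFourier (n + 1) (k + 1) + chebyshevFourier (n + 1) (k - 1))
      - chebyshevFourier n k := by
  rw [chebyshevFourier]

theorem chebyshevFourier_derivative (n : ℕ) (k : ℤ) :
    (k : ℝ[X]) * chebyshevFourier n k - ((k + 1 : ℤ) : ℝ[X]) * chebyshevFourier n (k + 1)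
      = X * (derivative (chebyshevFourier n k) + derivative (chebyshevFourier n (k + 1))) := by
  induction n using Nat.twoStepInduction generalizing k with
  | zero =>
    obtain rfl | rfl | ⟨h₀, h₁⟩ : k = 0 ∨ k = -1 ∨ (k ≠ 0 ∧ k + 1 ≠ 0) := by omega
    · simp [chebyshevFourier]
    · simp [chebyshevFourier]
    · simp [chebyshevFourier, h₀, h₁]
  | one =>
    by_cases h : k = -2 ∨ k = -1 ∨ k = 0 ∨ k = 1
    · rcases h with rfl | rfl | rfl | rfl <;> simp [chebyshevFourier] <;> ring
    · have h₀ : k ≠ 0 ∧ ¬(k = 1 ∨ k = -1) := by omega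
      have h₁ : k + 1 ≠ 0 ∧ ¬(k + 1 = 1 ∨ k + 1 = -1) := by omega
      simp only [chebyshevFourier, if_neg h₀.1, if_neg h₀.2, if_neg h₁.1, if_neg h₁.2]
      simp
  | more n ih₀ ih₁ =>
    have ihk := ih₁ k
    have ihsucc := ih₁ (k + 1)
    have ihpred := ih₁ (k - 1)
    rw [sub_add_cancel] at ihpred
    push_cast at ihk ihsucc ihpred ih₀ ⊢
    simp only [chebyshevFourier_add_two, add_sub_cancel_right, derivative_add, derivative_sub,
      derivative_mul, derivative_X, derivative_one, derivative_ofNat]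
    linear_combination 2 * (1 - X) * ihk + X * (ihsucc + ihpred) - ih₀ k

theorem chebyshevFourier_eq_zero {n : ℕ} {k : ℤ} (h : n < k) : chebyshevFourier n k = 0 := by
  induction n using Nat.twoStepInduction generalizing k with
  | zero => exact if_neg (by omega)
  | one =>
    push_cast at h
    rw [chebyshevFourier, if_neg (by omega), if_neg (by omega)]
  | more n ih₀ ih₁ =>
    push_cast at h ih₁
    rw [chebyshevFourier_add_two, ih₀ (by omega), ih₁ (by omega), ih₁ (by omega), ih₁ (by omega)]
    ring

theorem eval_one_chebyshevFourier_add_succ (n : ℕ) (k : ℤ) :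
    (chebyshevFourier n k).eval 1 + (chebyshevFourier n (k + 1)).eval 1
      = if -(n : ℤ) - 1 ≤ k ∧ k ≤ n then 1 else 0 := by
  induction n using Nat.twoStepInduction generalizing k with
  | zero =>
    simp only [chebyshevFourier]
    split_ifs <;> first | omega | simp
  | one =>
    simp only [chebyshevFourier]
    split_ifs <;> first | omega | simp
  | more n ih₀ ih₁ =>
    have ihsucc := ih₁ (k + 1)
    have ihpred := ih₁ (k - 1)
    rw [sub_add_cancel] at ihpred
    have hrec : (chebyshevFourier (n + 2) k).eval 1 + (chebyshevFourier (n + 2) (k + 1)).eval 1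
        = ((chebyshevFourier (n + 1) (k + 1)).eval 1
            + (chebyshevFourier (n + 1) (k + 1 + 1)).eval 1)
          + ((chebyshevFourier (n + 1) (k - 1)).eval 1 + (chebyshevFourier (n + 1) k).eval 1)
          - ((chebyshevFourier n k).eval 1 + (chebyshevFourier n (k + 1)).eval 1) := by
      simp only [chebyshevFourier_add_two, eval_sub, eval_add, eval_mul, eval_ofNat, eval_one,
        eval_X, sub_self, mul_zero, zero_mul, one_mul, zero_add, add_sub_cancel_right]
      ring
    rw [hrec, ihsucc, ihpred, ih₀ k]
    push_cast
    split_ifs <;> first | omega | norm_num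

theorem coeff_one_laurent (k : ℤ) : (1 : ℝ[T;T⁻¹]).coeff k = if k = 0 then 1 else 0 := by
  rw [← LaurentPolynomial.T_zero, LaurentPolynomial.T_apply]
  simp only [eq_comm]

theorem coeff_C_mul_T_mul (x : ℝ) (m k : ℤ) (L : ℝ[T;T⁻¹]) :
    (LaurentPolynomial.C x * LaurentPolynomial.T m * L).coeff k = x * L.coeff (k - m) := by
  rw [← LaurentPolynomial.single_eq_C_mul_T]
  exact L.coeff_single_mul_eq_mul_coeff _ fun _ _ => by omega

/-- The Laurent polynomial `2 (1 - y) + y (T + T⁻¹)`, that is `2 (1 - y + y cos φ)` with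
`T = e ^ (i φ)`. -/
def laurentCosine (y : ℝ) : ℝ[T;T⁻¹] :=
  LaurentPolynomial.C (2 * (1 - y))
    + LaurentPolynomial.C y * (LaurentPolynomial.T 1 + LaurentPolynomial.T (-1))

theorem coeff_laurentCosine_mul (y : ℝ) (L : ℝ[T;T⁻¹]) (k : ℤ) :
    (laurentCosine y * L).coeff k
      = 2 * (1 - y) * L.coeff k + y * (L.coeff (k + 1) + L.coeff (k - 1)) := by
  have h : laurentCosine y * L
      = LaurentPolynomial.C (2 * (1 - y)) * LaurentPolynomial.T 0 * L
        + (LaurentPolynomial.C y * LaurentPolynomial.T 1 * L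
          + LaurentPolynomial.C y * LaurentPolynomial.T (-1) * L) := by
    rw [laurentCosine, LaurentPolynomial.T_zero]
    ring
  rw [h, AddMonoidAlgebra.coeff_add, AddMonoidAlgebra.coeff_add, Finsupp.add_apply,
    Finsupp.add_apply, coeff_C_mul_T_mul, coeff_C_mul_T_mul, coeff_C_mul_T_mul, sub_zero,
    sub_neg_eq_add]
  ring

theorem coeff_eval_chebyshev_laurentCosine (n : ℕ) (y : ℝ) (k : ℤ) :
    ((Chebyshev.S ℝ[T;T⁻¹] n).eval (laurentCosine y)).coeff k
      = (chebyshevFourier n k).eval y := by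
  induction n using Nat.twoStepInduction generalizing k with
  | zero =>
    simp only [Nat.cast_zero, Chebyshev.S_zero, eval_one, chebyshevFourier, coeff_one_laurent]
    split_ifs <;> simp
  | one =>
    have h := coeff_laurentCosine_mul y 1 k
    rw [mul_one] at h
    simp only [Nat.cast_one, Chebyshev.S_one, eval_X, h, chebyshevFourier, coeff_one_laurent]
    split_ifs <;> first | omega | simp
  | more n ih₀ ih₁ =>
    push_cast at ih₁ ⊢
    rw [Chebyshev.S_add_two, eval_sub, eval_mul, eval_X, chebyshevFourier_add_two,
      AddMonoidAlgebra.coeff_sub, Finsupp.sub_apply, coeff_laurentCosine_mul, ih₀, ih₁, ih₁, ih₁]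
    simp

theorem coeff_symPowRow_mul_coeff_transpose_nonneg (M : Matrix (Fin 2) (Fin 2) ℝ) {p q : ℕ × ℕ}
    (h : p.1 + p.2 = q.1 + q.2) :
    0 ≤ (symPowRow M p).coeff q.1 * (symPowRow M.transpose q).coeff p.1 := by
  have hq : (0 : ℝ) < ((q.1 + q.2).choose q.1 : ℝ) :=
    Nat.cast_pos.2 (Nat.choose_pos (Nat.le_add_right _ _))
  refine nonneg_of_mul_nonneg_right ?_ hq
  rw [mul_left_comm, ← choose_mul_coeff_symPowRow_transpose M h, mul_left_comm]
  exact mul_nonneg (Nat.cast_nonneg _) (mul_self_nonneg _)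

/-- The conjugate `D M D⁻¹` of a real matrix by the diagonal matrix `D` with entries `T` and `1`. -/
def laurentConj (M : Matrix (Fin 2) (Fin 2) ℝ) : Matrix (Fin 2) (Fin 2) ℝ[T;T⁻¹] :=
  !![LaurentPolynomial.C (M 0 0), LaurentPolynomial.T 1 * LaurentPolynomial.C (M 0 1);
    LaurentPolynomial.T (-1) * LaurentPolynomial.C (M 1 0), LaurentPolynomial.C (M 1 1)]

theorem laurent_T_one_mul_T_neg_one :
    (LaurentPolynomial.T 1 * LaurentPolynomial.T (-1) : ℝ[T;T⁻¹]) = 1 := by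
  rw [← LaurentPolynomial.T_add, add_neg_cancel, LaurentPolynomial.T_zero]

theorem coeff_symPowRow_laurentConj (M : Matrix (Fin 2) (Fin 2) ℝ) (p : ℕ × ℕ) (j : ℕ) :
    (symPowRow (laurentConj M) p).coeff j
      = LaurentPolynomial.C ((symPowRow M p).coeff j) * LaurentPolynomial.T (p.1 - j) := by
  have hM : LaurentPolynomial.C.mapMatrix M
      = !![LaurentPolynomial.C (M 0 0), LaurentPolynomial.C (M 0 1);
        LaurentPolynomial.C (M 1 0), LaurentPolynomial.C (M 1 1)] := by
    ext i l
    fin_cases i <;> fin_cases l <;> rfl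
  have hT : (LaurentPolynomial.T (p.1 - j) : ℝ[T;T⁻¹])
      = LaurentPolynomial.T 1 ^ p.1 * LaurentPolynomial.T (-1) ^ j := by
    rw [LaurentPolynomial.T_pow, LaurentPolynomial.T_pow, ← LaurentPolynomial.T_add]
    congr 1
    ring
  rw [laurentConj, coeff_symPowRow_conj_diagonal _ _ _ _ laurent_T_one_mul_T_neg_one, ← hM,
    ← map_symPowRow, coeff_map, hT]
  ring

theorem coeff_symPowShiftedTrace_mul_laurentConj_nonneg (M : Matrix (Fin 2) (Fin 2) ℝ) (n : ℕ)
    (k : ℤ) : 0 ≤ (symPowShiftedTrace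
      (LaurentPolynomial.C.mapMatrix M * laurentConj M.transpose) 0 n).coeff k := by
  simp only [symPowShiftedTrace, symPowRow_mul, finsetSum_coeff, coeff_C_mul,
    coeff_symPowRow_laurentConj, ← map_symPowRow, coeff_map, add_zero, ← mul_assoc, ← map_mul,
    AddMonoidAlgebra.coeff_sum, Finsupp.finsetSum_apply]
  refine Finset.sum_nonneg fun p _ => Finset.sum_nonneg fun q hq => ?_
  rw [← LaurentPolynomial.single_eq_C_mul_T, AddMonoidAlgebra.coeff_single, Finsupp.single_apply]
  split_ifs
  · exact coeff_symPowRow_mul_coeff_transpose_nonneg M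
      (Finset.HasAntidiagonal.mem_antidiagonal.1 hq).symm
  · exact le_rfl

theorem chebyshevFourier_eval_nonneg (n : ℕ) (k : ℤ) {y : ℝ} (hy₀ : 0 ≤ y) (hy₁ : y ≤ 1) :
    0 ≤ (chebyshevFourier n k).eval y := by
  -- Rotate by an angle with `cos² = 1 - y` and `sin² = y`.
  obtain ⟨a, ha⟩ : ∃ a : ℝ, a ^ 2 = 1 - y := ⟨√(1 - y), Real.sq_sqrt (by linarith)⟩
  obtain ⟨b, hb⟩ : ∃ b : ℝ, b ^ 2 = y := ⟨√y, Real.sq_sqrt hy₀⟩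
  let C := LaurentPolynomial.C (R := ℝ)
  let G : Matrix (Fin 2) (Fin 2) ℝ := !![a, b; -b, a]
  have hCa : C a ^ 2 = C (1 - y) := by rw [← map_pow, ha]
  have hCb : C b ^ 2 = C y := by rw [← map_pow, hb]
  have htrace : (C.mapMatrix G * laurentConj G.transpose).trace = laurentCosine y := by
    have hcos : laurentCosine y
        = 2 * C a ^ 2 + C b ^ 2 * (LaurentPolynomial.T 1 + LaurentPolynomial.T (-1)) := by
      rw [laurentCosine, hCa, hCb, map_mul, map_ofNat]
    rw [hcos]
    simp only [G, C, laurentConj, Matrix.trace_fin_two, Matrix.mul_apply, Fin.sum_univ_two,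
      RingHom.mapMatrix_apply, Matrix.map_apply, Matrix.transpose_apply, Matrix.of_apply,
      Matrix.cons_val', Matrix.cons_val_zero, Matrix.cons_val_fin_one, Matrix.cons_val_one, map_neg]
    ring
  have hdet : (C.mapMatrix G * laurentConj G.transpose).det = 1 := by
    have hab : C a ^ 2 + C b ^ 2 = 1 := by rw [hCa, hCb, ← map_add, sub_add_cancel, map_one]
    rw [Matrix.det_mul]
    simp only [G, laurentConj, Matrix.det_fin_two, RingHom.mapMatrix_apply, Matrix.map_apply,
      Matrix.transpose_apply, Matrix.of_apply, Matrix.cons_val', Matrix.cons_val_zero,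
      Matrix.cons_val_fin_one, Matrix.cons_val_one, map_neg]
    linear_combination (C a ^ 2 + C b ^ 2 + 1) * hab
      + (C a ^ 2 + C b ^ 2) * C b ^ 2 * laurent_T_one_mul_T_neg_one
  rw [← coeff_eval_chebyshev_laurentCosine, ← htrace, ← symPowShiftedTrace_eq_eval_chebyshev _ hdet]
  exact coeff_symPowShiftedTrace_mul_laurentConj_nonneg G n k

end ChebyshevFourier

section Weights

open Polynomial Asymptotics Filter

theorem hasDerivAt_eval_exp_neg (P : ℝ[X]) (t : ℝ) :
    HasDerivAt (fun t => P.eval (Real.exp (-t))) (-(X * derivative P).eval (Real.exp (-t))) t := by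
  refine ((P.hasDerivAt _).comp t (hasDerivAt_neg t).exp).congr_deriv ?_
  rw [eval_mul, eval_X]
  ring

theorem exp_neg_mem_Icc {t : ℝ} (ht : 0 ≤ t) : Real.exp (-t) ∈ Icc (0 : ℝ) 1 :=
  ⟨(Real.exp_pos _).le, Real.exp_le_one_iff.2 (by linarith)⟩

theorem isBigO_eval_exp_neg (P : ℝ[X]) :
    (fun t => P.eval (Real.exp (-t))) =O[𝓟 (Ici 0)] fun _ => (1 : ℝ) := by
  obtain ⟨C, hC⟩ := isCompact_Icc.exists_bound_of_continuousOn (P.continuousOn (s := Icc 0 1))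
  exact isBigO_principal.2 ⟨C, fun t ht => by simpa using hC _ (exp_neg_mem_Icc ht)⟩

theorem exists_abs_eval_exp_neg_sub_le (P : ℝ[X]) :
    ∃ C, 0 ≤ C ∧ ∀ s ∈ Ici (0 : ℝ), ∀ t ∈ Ici (0 : ℝ),
      |P.eval (Real.exp (-t)) - P.eval (Real.exp (-s))| ≤ C * |t - s| := by
  obtain ⟨C, hC₀, hC⟩ := (isBigO_eval_exp_neg (X * derivative P)).exists_nonneg
  refine ⟨C, hC₀, fun s hs t ht => (convex_Ici 0).norm_image_sub_le_of_norm_hasDerivWithin_le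
    (fun x _ => (hasDerivAt_eval_exp_neg P x).hasDerivWithinAt) (fun x hx => ?_) hs ht⟩
  simpa using (isBigOWith_principal.1 hC) x hx

theorem isBigO_eval_exp_neg_taylor (P : ℝ[X]) :
    (fun x : ℝ × ℝ => P.eval (Real.exp (-x.1)) - P.eval (Real.exp (-(x.1 + x.2)))
        - x.2 * (X * derivative P).eval (Real.exp (-(x.1 + x.2))))
      =O[𝓟 (Ici 0 ×ˢ Ici 0)] fun x => x.2 ^ 2 := by
  obtain ⟨C, hC₀, hC⟩ := exists_abs_eval_exp_neg_sub_le (X * derivative P)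
  refine isBigO_principal.2 ⟨C, fun ⟨t, h⟩ ⟨ht, hh⟩ => ?_⟩
  simp only [mem_Ici] at ht hh
  set c := (X * derivative P).eval (Real.exp (-(t + h)))
  have hderiv (s : ℝ) : HasDerivAt (fun s => P.eval (Real.exp (-s)) + c * s)
      (-(X * derivative P).eval (Real.exp (-s)) + c) s :=
    (hasDerivAt_eval_exp_neg P s).add
      (((hasDerivAt_id s).const_mul c).congr_deriv (mul_one c))
  have hbound : ∀ s ∈ Icc t (t + h),
      ‖-(X * derivative P).eval (Real.exp (-s)) + c‖ ≤ C * h := fun s hs => by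
    rw [neg_add_eq_sub, Real.norm_eq_abs]
    refine (hC s (ht.trans hs.1) (t + h) (add_nonneg ht hh)).trans ?_
    rw [abs_of_nonneg (sub_nonneg.2 hs.2)]
    exact mul_le_mul_of_nonneg_left (by linarith [hs.1]) hC₀
  have hmean := (convex_Icc t (t + h)).norm_image_sub_le_of_norm_hasDerivWithin_le
    (fun s _ => (hderiv s).hasDerivWithinAt) hbound
    (right_mem_Icc.2 (le_add_of_nonneg_right hh)) (left_mem_Icc.2 (le_add_of_nonneg_right hh))
  calc ‖P.eval (Real.exp (-t)) - P.eval (Real.exp (-(t + h))) - h * c‖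
      = ‖P.eval (Real.exp (-t)) + c * t - (P.eval (Real.exp (-(t + h))) + c * (t + h))‖ := by
        congr 1; ring
    _ ≤ C * h * ‖t - (t + h)‖ := hmean
    _ = C * ‖h ^ 2‖ := by
        rw [sub_add_cancel_left, norm_neg, norm_pow, Real.norm_of_nonneg hh]; ring

/-- De Branges' weight `τ_k` of order `n`, as a polynomial in `e ^ (-t)`. -/
def deBrangesWeight (n k : ℕ) : ℝ[X] :=
  ∑ j ∈ Finset.Ico k (n + 1), (chebyshevFourier n j + chebyshevFourier n (j + 1))

theorem deBrangesWeight_self_add_one (n : ℕ) : deBrangesWeight n (n + 1) = 0 := by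
  simp [deBrangesWeight]

theorem deBrangesWeight_sub_add_one {n k : ℕ} (hk : k ≤ n) :
    deBrangesWeight n k - deBrangesWeight n (k + 1)
      = chebyshevFourier n k + chebyshevFourier n (k + 1) := by
  rw [deBrangesWeight, deBrangesWeight, Finset.sum_eq_sum_Ico_succ_bot (by omega),
    add_sub_cancel_right]

theorem deBrangesWeight_eval_nonneg (n k : ℕ) {y : ℝ} (hy₀ : 0 ≤ y) (hy₁ : y ≤ 1) :
    0 ≤ (deBrangesWeight n k).eval y := by
  rw [deBrangesWeight, eval_finsetSum]
  exact Finset.sum_nonneg fun j _ => by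
    rw [eval_add]
    exact add_nonneg (chebyshevFourier_eval_nonneg n _ hy₀ hy₁)
      (chebyshevFourier_eval_nonneg n _ hy₀ hy₁)

theorem deBrangesWeight_eval_one {n k : ℕ} (hk : k ≤ n + 1) :
    (deBrangesWeight n k).eval 1 = n + 1 - k := by
  have hterm : ∀ j ∈ Finset.Ico k (n + 1),
      (chebyshevFourier n j + chebyshevFourier n (j + 1)).eval 1 = 1 := fun j hj => by
    rw [eval_add, eval_one_chebyshevFourier_add_succ, if_pos]
    rw [Finset.mem_Ico] at hj
    omega
  rw [deBrangesWeight, eval_finsetSum, Finset.sum_congr rfl hterm]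
  simp [Nat.cast_sub hk]

theorem X_mul_derivative_deBrangesWeight {n k : ℕ} (hk : k ≤ n + 1) :
    X * derivative (deBrangesWeight n k) = (k : ℝ[X]) * chebyshevFourier n k := by
  have hterm : ∀ j ∈ Finset.Ico k (n + 1),
      X * derivative (chebyshevFourier n j + chebyshevFourier n (j + 1))
        = -(((j + 1 : ℕ) : ℝ[X]) * chebyshevFourier n (j + 1 : ℕ)
          - (j : ℝ[X]) * chebyshevFourier n j) := fun j _ => by
    have h := chebyshevFourier_derivative n j
    push_cast at h ⊢
    rw [derivative_add, ← h]
    ring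
  rw [deBrangesWeight, derivative_sum, Finset.mul_sum, Finset.sum_congr rfl hterm,
    Finset.sum_neg_distrib, Finset.sum_Ico_sub (fun j => (j : ℝ[X]) * chebyshevFourier n j) hk,
    chebyshevFourier_eq_zero (k := (n + 1 : ℕ)) (by omega)]
  ring

end Weights

section LebedevMilin

open PowerSeries Finset.Nat
open Finset.HasAntidiagonal (antidiagonal)

theorem sum_antidiagonal_fst {M : Type*} [AddCommMonoid M] (u : ℕ → M) (n : ℕ) :
    ∑ p ∈ antidiagonal n, u p.1 = ∑ k ∈ Finset.range (n + 1), u k :=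
  sum_antidiagonal_eq_sum_range_succ_mk (fun p => u p.1) n

theorem sum_antidiagonal_snd {M : Type*} [AddCommMonoid M] (u : ℕ → M) (n : ℕ) :
    ∑ p ∈ antidiagonal n, u p.2 = ∑ k ∈ Finset.range (n + 1), u k := by
  rw [← sum_antidiagonal_fst u n, ← sum_antidiagonal_swap]
  rfl

theorem sq_norm_coeff_succ_le {α β : ℂ⟦X⟧} (h : d⁄dX ℂ β = d⁄dX ℂ α * β) (n : ℕ) :
    (((n : ℝ) + 1) * ‖coeff (n + 1) β‖) ^ 2
      ≤ (∑ k ∈ Finset.range (n + 1), ((k : ℝ) + 1) ^ 2 * ‖coeff (k + 1) α‖ ^ 2)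
        * ∑ k ∈ Finset.range (n + 1), ‖coeff k β‖ ^ 2 := by
  have hnorm (γ : ℂ⟦X⟧) (k : ℕ) :
      ‖coeff k (d⁄dX ℂ γ)‖ = ((k : ℝ) + 1) * ‖coeff (k + 1) γ‖ := by
    rw [coeff_derivative, norm_mul, ← Nat.cast_succ, Complex.norm_natCast, Nat.cast_succ, mul_comm]
  have hle : ((n : ℝ) + 1) * ‖coeff (n + 1) β‖
      ≤ ∑ p ∈ antidiagonal n, ‖coeff p.1 (d⁄dX ℂ α)‖ * ‖coeff p.2 β‖ := by
    rw [← hnorm, h, coeff_mul]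
    exact (norm_sum_le _ _).trans_eq (Finset.sum_congr rfl fun p _ => norm_mul _ _)
  refine (pow_le_pow_left₀ (by positivity) hle 2).trans
    ((Finset.sum_mul_sq_le_sq_mul_sq _ _ _).trans_eq ?_)
  rw [sum_antidiagonal_fst (fun k => ‖coeff k (d⁄dX ℂ α)‖ ^ 2),
    sum_antidiagonal_snd (fun k => ‖coeff k β‖ ^ 2)]
  simp only [hnorm, mul_pow]

theorem milin_mean_succ (x : ℕ → ℝ) (n : ℕ) :
    (∑ k ∈ Finset.range (n + 1), ((n : ℝ) + 1 - k) * ((k + 1) * x k - 1 / (k + 1))) / (n + 2)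
      = (∑ k ∈ Finset.range n, ((n : ℝ) - k) * ((k + 1) * x k - 1 / (k + 1))) / (n + 1)
        + ((∑ k ∈ Finset.range (n + 1), ((k : ℝ) + 1) ^ 2 * x k) - (n + 1))
          / ((n + 1) * (n + 2)) := by
  have hext : ∑ k ∈ Finset.range n, ((n : ℝ) - k) * ((k + 1) * x k - 1 / (k + 1))
      = ∑ k ∈ Finset.range (n + 1), ((n : ℝ) - k) * ((k + 1) * x k - 1 / (k + 1)) := by
    rw [Finset.sum_range_succ, sub_self, zero_mul, add_zero]
  have hsub : (∑ k ∈ Finset.range (n + 1), ((k : ℝ) + 1) ^ 2 * x k) - ((n : ℝ) + 1)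
      = ∑ k ∈ Finset.range (n + 1), (((k : ℝ) + 1) ^ 2 * x k - 1) := by
    simp [Finset.sum_sub_distrib]
  rw [hext, hsub, Finset.sum_div, Finset.sum_div, Finset.sum_div, ← Finset.sum_add_distrib]
  refine Finset.sum_congr rfl fun k _ => ?_
  field_simp
  ring

theorem lebedev_milin {α β : ℂ⟦X⟧} (h : d⁄dX ℂ β = d⁄dX ℂ α * β) (n : ℕ) :
    ∑ k ∈ Finset.range (n + 1), ‖coeff k β‖ ^ 2 ≤ ‖coeff 0 β‖ ^ 2 * (n + 1) * Real.exp
      ((∑ k ∈ Finset.range n, ((n : ℝ) - k) * ((k + 1) * ‖coeff (k + 1) α‖ ^ 2 - 1 / (k + 1)))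
        / (n + 1)) := by
  induction n with
  | zero => simp
  | succ n ih =>
    have hcauchy := sq_norm_coeff_succ_le h n
    have hmean := milin_mean_succ (fun k => ‖coeff (k + 1) α‖ ^ 2) n
    rw [Finset.sum_range_succ]
    push_cast
    rw [add_assoc (n : ℝ) 1 1, one_add_one_eq_two, hmean, Real.exp_add]
    set A := ∑ k ∈ Finset.range (n + 1), ((k : ℝ) + 1) ^ 2 * ‖coeff (k + 1) α‖ ^ 2
    set B := ∑ k ∈ Finset.range (n + 1), ‖coeff k β‖ ^ 2
    set S := (∑ k ∈ Finset.range n,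
      ((n : ℝ) - k) * ((k + 1) * ‖coeff (k + 1) α‖ ^ 2 - 1 / (k + 1))) / ((n : ℝ) + 1)
    set D := (A - (n + 1)) / (((n : ℝ) + 1) * (n + 2)) with hD
    have _hA : 0 ≤ A := Finset.sum_nonneg fun _ _ => by positivity
    have hfactor : 1 + A / ((n : ℝ) + 1) ^ 2 = (n + 2) / (n + 1) * (D + 1) := by
      rw [hD]
      field_simp
      ring
    calc B + ‖coeff (n + 1) β‖ ^ 2 ≤ B + A * B / (n + 1) ^ 2 := by
          gcongr
          rwa [le_div_iff₀ (by positivity), mul_comm, ← mul_pow]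
      _ = B * (1 + A / (n + 1) ^ 2) := by ring
      _ ≤ (‖coeff 0 β‖ ^ 2 * (n + 1) * Real.exp S) * (1 + A / (n + 1) ^ 2) := by gcongr
      _ = (‖coeff 0 β‖ ^ 2 * (n + 2) * Real.exp S) * (D + 1) := by
          rw [hfactor]
          field_simp
      _ ≤ (‖coeff 0 β‖ ^ 2 * (n + 2) * Real.exp S) * Real.exp D := by
          gcongr
          exact Real.add_one_le_exp D
      _ = ‖coeff 0 β‖ ^ 2 * (n + 2) * (Real.exp S * Real.exp D) := mul_assoc _ _ _

end LebedevMilin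

section DeBranges

open PowerSeries ComplexConjugate
open Finset.HasAntidiagonal (antidiagonal)

/-- The Taylor series `1 + 2 ∑ κ ^ m X ^ m` of the Herglotz kernel `(1 + κ z) / (1 - κ z)`. -/
def herglotzSeries (κ : ℂ) : ℂ⟦X⟧ :=
  PowerSeries.mk fun m => if m = 0 then 1 else 2 * κ ^ m

theorem coeff_mul_herglotzSeries (Q : ℂ⟦X⟧) {κ : ℂ} (hκ : κ ≠ 0) (m : ℕ) :
    coeff m (Q * herglotzSeries κ)
      = κ ^ m * (∑ j ∈ Finset.range (m + 1), coeff j Q * κ⁻¹ ^ j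
        + ∑ j ∈ Finset.range m, coeff j Q * κ⁻¹ ^ j) := by
  have hterm : ∀ j ∈ Finset.range m, coeff j Q * coeff (m - j) (herglotzSeries κ)
      = κ ^ m * (2 * (coeff j Q * κ⁻¹ ^ j)) := fun j hj => by
    rw [Finset.mem_range] at hj
    rw [herglotzSeries, coeff_mk, if_neg (by omega), pow_sub₀ κ hκ hj.le, inv_pow]
    ring
  rw [coeff_mul, Finset.Nat.sum_antidiagonal_eq_sum_range_succ_mk, Finset.sum_range_succ,
    Finset.sum_congr rfl hterm, ← Finset.mul_sum, ← Finset.mul_sum, Finset.sum_range_succ,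
    herglotzSeries, coeff_mk, Nat.sub_self, if_pos rfl, inv_pow]
  field_simp
  ring

theorem sum_mul_sub_eq_of_sub_eq_add {τ l g : ℕ → ℝ} {n : ℕ} (hg : g 0 = 0)
    (hτ : ∀ k ≤ n, τ k - τ (k + 1) = l k + l (k + 1)) {m : ℕ} (hm : m ≤ n) :
    ∑ i ∈ Finset.range m, τ (i + 1) * (g (i + 1) - g i)
      = ∑ i ∈ Finset.range m, l (i + 1) * (g (i + 1) + g i) + (τ m - l m) * g m := by
  induction m with
  | zero => simp [hg]
  | succ m ih =>
    rw [Finset.sum_range_succ, Finset.sum_range_succ, ih (by omega)]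
    linear_combination g m * hτ m (by omega)

theorem re_conj_sub_mul_add (z w : ℂ) : (conj (z - w) * (z + w)).re = ‖z‖ ^ 2 - ‖w‖ ^ 2 := by
  simp only [Complex.sq_norm, Complex.normSq_apply, Complex.mul_re, map_sub, Complex.sub_re,
    Complex.conj_re, Complex.sub_im, Complex.conj_im, Complex.add_re, Complex.add_im]
  ring

/-- The first variation of `k |p_k|² - 4 / k` in the direction of the first-order change
`(1 - z p') P` of the logarithm under composition with `z exp (- h P)`. -/
def coeffVariation (p : ℂ⟦X⟧) (k : ℕ) : ℂ⟦X⟧ →ₗ[ℝ] ℝ :=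
  (k : ℝ) • Complex.reLm ∘ₗ
    (conj (coeff k p) • coeff k ∘ₗ LinearMap.mulLeft ℂ (1 - X * d⁄dX ℂ p)).restrictScalars ℝ

theorem coeffVariation_apply (p : ℂ⟦X⟧) (k : ℕ) (P : ℂ⟦X⟧) :
    coeffVariation p k P = k * (conj (coeff k p) * coeff k ((1 - X * d⁄dX ℂ p) * P)).re := rfl

theorem coeffVariation_herglotzSeries (p : ℂ⟦X⟧) {κ : ℂ} (hκ : ‖κ‖ = 1) :
    ∃ S : ℕ → ℂ, S 0 = 1 ∧ (∀ i : ℕ, ((i + 1 : ℕ) : ℝ) * ‖coeff (i + 1) p‖ = ‖S (i + 1) - S i‖) ∧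
      ∀ i, coeffVariation p (i + 1) (herglotzSeries κ) = ‖S i‖ ^ 2 - ‖S (i + 1)‖ ^ 2 := by
  have hκ₀ : κ ≠ 0 := norm_ne_zero_iff.1 (by rw [hκ]; exact one_ne_zero)
  set Q : ℂ⟦X⟧ := 1 - X * d⁄dX ℂ p with hQ
  have hQ_coeff (i : ℕ) : coeff (i + 1) Q = -((i + 1 : ℕ) * coeff (i + 1) p) := by
    rw [hQ, map_sub, coeff_succ_X_mul, coeff_derivative, coeff_one, if_neg i.succ_ne_zero]
    push_cast
    ring
  let S : ℕ → ℂ := fun i => ∑ j ∈ Finset.range (i + 1), coeff j Q * κ⁻¹ ^ j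
  have hS (i : ℕ) : S (i + 1) - S i = coeff (i + 1) Q * κ⁻¹ ^ (i + 1) := by
    simp only [S, Finset.sum_range_succ _ (i + 1), add_sub_cancel_left]
  have hconj : conj κ⁻¹ = κ := by rw [map_inv₀, ← Complex.inv_eq_conj hκ, inv_inv]
  refine ⟨S, by simp [S, hQ], fun i => ?_, fun i => ?_⟩
  · rw [hS, hQ_coeff, norm_mul, norm_neg, norm_mul, norm_pow, norm_inv, hκ, inv_one, one_pow,
      mul_one, Complex.norm_natCast]
  · have hconjS : conj (S (i + 1) - S i)
        = -((i + 1 : ℕ) * conj (coeff (i + 1) p) * κ ^ (i + 1)) := by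
      rw [hS, hQ_coeff, map_mul, map_neg, map_mul, map_pow, hconj, Complex.conj_natCast]
      ring
    rw [← neg_sub (‖S (i + 1)‖ ^ 2), ← re_conj_sub_mul_add, hconjS, coeffVariation_apply,
      coeff_mul_herglotzSeries Q hκ₀, ← Complex.re_ofReal_mul, ← Complex.neg_re]
    congr 1
    push_cast
    ring

theorem deBranges_variation_herglotzSeries_nonpos {τ l : ℕ → ℝ} {n : ℕ} (hl : ∀ k, 0 ≤ l k)
    (hτ : ∀ k ≤ n, τ k - τ (k + 1) = l k + l (k + 1)) (hτn : τ (n + 1) = 0) (hln : l (n + 1) = 0)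
    (p : ℂ⟦X⟧) {κ : ℂ} (hκ : ‖κ‖ = 1) :
    ∑ i ∈ Finset.range n, ((i + 1 : ℕ) * l (i + 1)
        * ((i + 1 : ℕ) * ‖coeff (i + 1) p‖ ^ 2 - 4 / (i + 1 : ℕ))
      + 2 * (τ (i + 1) * coeffVariation p (i + 1) (herglotzSeries κ))) ≤ 0 := by
  obtain ⟨S, hS₀, hS, hvar⟩ := coeffVariation_herglotzSeries p hκ
  have habel := sum_mul_sub_eq_of_sub_eq_add (g := fun k => ‖S k‖ ^ 2 - 1) (by simp [hS₀]) hτ le_rfl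
  have hn : τ n - l n = 0 := by linarith [hτ n le_rfl]
  have hterm (i : ℕ) : (i + 1 : ℕ) * l (i + 1)
        * ((i + 1 : ℕ) * ‖coeff (i + 1) p‖ ^ 2 - 4 / (i + 1 : ℕ))
      + 2 * (τ (i + 1) * coeffVariation p (i + 1) (herglotzSeries κ))
      = -(l (i + 1) * ‖S (i + 1) + S i‖ ^ 2)
        + 2 * (l (i + 1) * (‖S (i + 1)‖ ^ 2 - 1 + (‖S i‖ ^ 2 - 1))
          - τ (i + 1) * (‖S (i + 1)‖ ^ 2 - 1 - (‖S i‖ ^ 2 - 1))) := by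
    have hsq : ((i + 1 : ℕ) : ℝ) * ((i + 1 : ℕ) * ‖coeff (i + 1) p‖ ^ 2 - 4 / (i + 1 : ℕ))
        = ‖S (i + 1) - S i‖ ^ 2 - 4 := by
      rw [← hS]
      field_simp
    have hpar := parallelogram_law_with_norm ℝ (S (i + 1)) (S i)
    rw [mul_right_comm, hsq, hvar]
    linear_combination l (i + 1) * hpar
  rw [Finset.sum_congr rfl fun i _ => hterm i, Finset.sum_add_distrib, ← Finset.mul_sum,
    Finset.sum_sub_distrib, habel, hn, zero_mul, add_zero, sub_self, mul_zero, add_zero,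
    Finset.sum_neg_distrib, neg_nonpos]
  exact Finset.sum_nonneg fun i _ => mul_nonneg (hl _) (sq_nonneg _)

end DeBranges

section MaclaurinSeries

open PowerSeries Topology

/-- The Taylor series of `f` at the origin, as a formal power series. -/
def maclaurinSeries (f : ℂ → ℂ) : ℂ⟦X⟧ :=
  PowerSeries.mk fun n => (n.factorial : ℂ)⁻¹ * iteratedDeriv n f 0

theorem coeff_maclaurinSeries (f : ℂ → ℂ) (n : ℕ) :
    coeff n (maclaurinSeries f) = (n.factorial : ℂ)⁻¹ * iteratedDeriv n f 0 :=
  coeff_mk _ _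

theorem coeff_zero_maclaurinSeries (f : ℂ → ℂ) : coeff 0 (maclaurinSeries f) = f 0 := by
  rw [coeff_maclaurinSeries, Nat.factorial_zero, Nat.cast_one, inv_one, one_mul, iteratedDeriv_zero]

theorem maclaurinSeries_congr {f g : ℂ → ℂ} (h : f =ᶠ[𝓝 0] g) :
    maclaurinSeries f = maclaurinSeries g := by
  ext n
  rw [coeff_maclaurinSeries, coeff_maclaurinSeries, h.iteratedDeriv_eq]

theorem maclaurinSeries_add {f g : ℂ → ℂ} (hf : AnalyticAt ℂ f 0) (hg : AnalyticAt ℂ g 0) :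
    maclaurinSeries (f + g) = maclaurinSeries f + maclaurinSeries g := by
  ext n
  rw [map_add, coeff_maclaurinSeries, coeff_maclaurinSeries, coeff_maclaurinSeries,
    iteratedDeriv_add hf.contDiffAt hg.contDiffAt, mul_add]

theorem maclaurinSeries_sub {f g : ℂ → ℂ} (hf : AnalyticAt ℂ f 0) (hg : AnalyticAt ℂ g 0) :
    maclaurinSeries (f - g) = maclaurinSeries f - maclaurinSeries g := by
  ext n
  rw [map_sub, coeff_maclaurinSeries, coeff_maclaurinSeries, coeff_maclaurinSeries,
    iteratedDeriv_sub hf.contDiffAt hg.contDiffAt, mul_sub]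

theorem maclaurinSeries_const_smul (c : ℂ) (f : ℂ → ℂ) :
    maclaurinSeries (c • f) = c • maclaurinSeries f := by
  ext n
  rw [coeff_smul, coeff_maclaurinSeries, coeff_maclaurinSeries, iteratedDeriv_const_smul_field,
    smul_eq_mul, smul_eq_mul, mul_left_comm]

theorem maclaurinSeries_mul {f g : ℂ → ℂ} (hf : AnalyticAt ℂ f 0) (hg : AnalyticAt ℂ g 0) :
    maclaurinSeries (f * g) = maclaurinSeries f * maclaurinSeries g := by
  ext n
  rw [coeff_mul, Finset.Nat.sum_antidiagonal_eq_sum_range_succ_mk, coeff_maclaurinSeries,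
    iteratedDeriv_mul hf.contDiffAt hg.contDiffAt, Finset.mul_sum]
  refine Finset.sum_congr rfl fun i hi => ?_
  rw [coeff_maclaurinSeries, coeff_maclaurinSeries,
    Nat.cast_choose ℂ (Nat.lt_succ_iff.1 (Finset.mem_range.1 hi))]
  field_simp [Nat.factorial_ne_zero]

theorem maclaurinSeries_deriv (f : ℂ → ℂ) :
    maclaurinSeries (deriv f) = d⁄dX ℂ (maclaurinSeries f) := by
  ext n
  rw [coeff_derivative, coeff_maclaurinSeries, coeff_maclaurinSeries, ← iteratedDeriv_succ',
    Nat.factorial_succ]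
  push_cast
  field_simp

theorem maclaurinSeries_id : maclaurinSeries id = X := by
  ext n
  rw [coeff_maclaurinSeries, iteratedDeriv_id, coeff_X]
  rcases n with _ | _ | n <;> simp

theorem hasSum_maclaurinSeries {f : ℂ → ℂ} {r : ℝ} (hf : DifferentiableOn ℂ f (ball 0 r)) {z : ℂ}
    (hz : z ∈ ball (0 : ℂ) r) : HasSum (fun n => coeff n (maclaurinSeries f) * z ^ n) (f z) := by
  refine (Complex.hasSum_taylorSeries_on_ball hf hz).congr_fun fun n => ?_
  rw [coeff_maclaurinSeries, sub_zero, smul_eq_mul, smul_eq_mul]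
  ring

theorem norm_coeff_maclaurinSeries_le {f : ℂ → ℂ} {r C : ℝ} (hr : 0 < r)
    (hf : DiffContOnCl ℂ f (ball 0 r)) (hC : ∀ z ∈ sphere (0 : ℂ) r, ‖f z‖ ≤ C) (n : ℕ) :
    ‖coeff n (maclaurinSeries f)‖ ≤ C / r ^ n := by
  rw [coeff_maclaurinSeries, norm_mul, norm_inv, Complex.norm_natCast,
    inv_mul_le_iff₀ (by exact_mod_cast n.factorial_pos), ← mul_div_assoc]
  exact Complex.norm_iteratedDeriv_le_of_forall_mem_sphere_norm_le n hr hf hC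

theorem norm_le_of_norm_coeff_maclaurinSeries_le {f : ℂ → ℂ} (hf : DifferentiableOn ℂ f (ball 0 1))
    {C r : ℝ} (hC : ∀ n, ‖coeff n (maclaurinSeries f)‖ ≤ C) (hr : r < 1) {z : ℂ} (hz : ‖z‖ ≤ r) :
    ‖f z‖ ≤ C * (1 - r)⁻¹ := by
  have hsum := hasSum_maclaurinSeries hf (mem_ball_zero_iff.2 (hz.trans_lt hr))
  have hgeom := hasSum_geometric_of_lt_one ((norm_nonneg z).trans hz) hr
  rw [← hsum.tsum_eq]
  refine tsum_of_norm_bounded (hgeom.mul_left C) fun n => ?_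
  rw [norm_mul, norm_pow]
  exact mul_le_mul (hC n) (pow_le_pow_left₀ (norm_nonneg z) hz n) (by positivity)
    ((norm_nonneg _).trans (hC n))

end MaclaurinSeries

section Caratheodory

open PowerSeries ComplexConjugate Real Topology

theorem circleAverage_mul_div_pow {f : ℂ → ℂ} {r : ℝ} (hr : 0 < r)
    (hf : DiffContOnCl ℂ f (ball 0 r)) (n : ℕ) :
    circleAverage (fun z => f z * (r / z) ^ n) 0 r = coeff n (maclaurinSeries f) * r ^ n := by
  have hcauchy := hf.circleIntegral_one_div_sub_center_pow_smul hr n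
  have hintegrand : (fun z : ℂ => (z - 0)⁻¹ • (f z * (r / z) ^ n))
      = fun z => (r : ℂ) ^ n • (1 / (z - 0) ^ (n + 1)) • f z := by
    funext z
    simp only [smul_eq_mul, sub_zero, pow_succ, mul_inv, div_eq_mul_inv]
    ring
  rw [circleAverage_eq_circleIntegral hr.ne', hintegrand, circleIntegral.integral_smul, hcauchy,
    coeff_maclaurinSeries]
  simp only [smul_eq_mul]
  field_simp [Complex.two_pi_I_ne_zero]

theorem circleAverage_conj_mul_div_pow {f : ℂ → ℂ} {r : ℝ} (hr : 0 < r)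
    (hf : DiffContOnCl ℂ f (ball 0 r)) {n : ℕ} (hn : n ≠ 0) :
    circleAverage (fun z => conj (f z) * (r / z) ^ n) 0 r = 0 := by
  have hg : DiffContOnCl ℂ (fun z => f z * (z / r) ^ n) (ball 0 |r|) := by
    rw [abs_of_pos hr]
    exact hf.smul (((differentiable_id.div_const (r : ℂ)).pow n).diffContOnCl)
  have hconj : EqOn (fun z : ℂ => conj (f z) * (r / z) ^ n)
      (Complex.conjCLE.toContinuousLinearMap ∘ fun z => f z * (z / r) ^ n) (sphere 0 |r|) := by
    intro z hz
    rw [abs_of_pos hr, mem_sphere_zero_iff_norm] at hz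
    have hzr : (r : ℂ) / z = conj (z / r) := by
      rw [← inv_div, Complex.inv_eq_conj]
      rw [norm_div, hz, Complex.norm_real, norm_of_nonneg hr.le, div_self hr.ne']
    simp [hzr]
  rw [circleAverage_congr_sphere hconj, ContinuousLinearMap.circleAverage_comp_comm,
    hg.circleAverage, zero_div, zero_pow hn, mul_zero, map_zero]
  exact (hg.continuousOn_ball.mono sphere_subset_closedBall).circleIntegrable'

theorem continuous_coeff_herglotzSeries (n : ℕ) :
    Continuous fun κ => coeff n (herglotzSeries κ) := by
  simp only [herglotzSeries, coeff_mk]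
  split_ifs <;> fun_prop

theorem circleAverage_re_mul_coeff_herglotzSeries {f : ℂ → ℂ} {r : ℝ} (hr : 0 < r)
    (hf : DiffContOnCl ℂ f (ball 0 r)) (him : (f 0).im = 0) (n : ℕ) :
    circleAverage (fun z => ((f z).re : ℂ) * coeff n (herglotzSeries (r / z))) 0 r
      = coeff n (maclaurinSeries f) * r ^ n := by
  have hcont : ContinuousOn f (sphere 0 |r|) := by
    rw [abs_of_pos hr]
    exact hf.continuousOn_ball.mono sphere_subset_closedBall
  have hdiv : ContinuousOn (fun z : ℂ => (r : ℂ) / z) (sphere 0 |r|) :=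
    continuousOn_const.div continuousOn_id fun z hz => by
      rintro rfl
      rw [abs_of_pos hr, mem_sphere_zero_iff_norm, norm_zero] at hz
      exact hr.ne hz
  rcases eq_or_ne n 0 with rfl | hn
  · have hre : (fun z => ((f z).re : ℂ) * coeff 0 (herglotzSeries (r / z)))
        = (Complex.ofRealCLM.comp Complex.reCLM) ∘ f := by
      funext z
      simp [herglotzSeries]
    rw [hre, ContinuousLinearMap.circleAverage_comp_comm _ hcont.circleIntegrable',
      DiffContOnCl.circleAverage (by rwa [abs_of_pos hr]), coeff_zero_maclaurinSeries, pow_zero,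
      mul_one]
    exact Complex.ext rfl him.symm
  · have hsplit : (fun z => ((f z).re : ℂ) * coeff n (herglotzSeries (r / z)))
        = fun z => f z * (r / z) ^ n + conj (f z) * (r / z) ^ n := by
      funext z
      rw [herglotzSeries, coeff_mk, if_neg hn, ← add_mul, Complex.add_conj]
      push_cast
      ring
    have hint : CircleIntegrable (fun z => f z * (r / z) ^ n) 0 r :=
      (hcont.mul (hdiv.pow n)).circleIntegrable'
    have hint_conj : CircleIntegrable (fun z => conj (f z) * (r / z) ^ n) 0 r :=
      ((Complex.continuous_conj.comp_continuousOn hcont).mul (hdiv.pow n)).circleIntegrable'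
    rw [hsplit, circleAverage_fun_add hint hint_conj,
      circleAverage_mul_div_pow hr hf, circleAverage_conj_mul_div_pow hr hf hn, add_zero]

/-- Holomorphic functions on the unit disc with nonnegative real part which are real at the
origin. They are the functions `p` for which `z * exp (-p z)` is a self-map of the disc with
positive derivative at the origin. -/
structure IsCaratheodory (p : ℂ → ℂ) : Prop where
  differentiableOn : DifferentiableOn ℂ p (ball 0 1)
  re_nonneg : ∀ z ∈ ball (0 : ℂ) 1, 0 ≤ (p z).re
  im_zero : (p 0).im = 0

namespace IsCaratheodory

variable {P : ℂ → ℂ}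

theorem analyticAt_zero (hP : IsCaratheodory P) : AnalyticAt ℂ P 0 :=
  hP.differentiableOn.analyticAt (ball_mem_nhds 0 one_pos)

theorem diffContOnCl (hP : IsCaratheodory P) {r : ℝ} (hr : r < 1) : DiffContOnCl ℂ P (ball 0 r) :=
  hP.differentiableOn.diffContOnCl_ball (closedBall_subset_ball hr)

theorem map_coeff_mul_pow_nonpos (hP : IsCaratheodory P) {n : ℕ} (Φ : (Fin n → ℂ) →L[ℝ] ℝ)
    (h : ∀ κ : ℂ, ‖κ‖ = 1 → Φ (fun m => coeff m (herglotzSeries κ)) ≤ 0) {r : ℝ} (hr₀ : 0 < r)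
    (hr₁ : r < 1) : Φ (fun m => coeff m (maclaurinSeries P) * r ^ (m : ℕ)) ≤ 0 := by
  have hd := hP.diffContOnCl hr₁
  let v : ℂ → Fin n → ℂ := fun z => (P z).re • fun m : Fin n => coeff m (herglotzSeries (r / z))
  have hv : ContinuousOn v (sphere 0 |r|) := by
    rw [abs_of_pos hr₀]
    refine (Complex.continuous_re.comp_continuousOn
      (hd.continuousOn_ball.mono sphere_subset_closedBall)).smul (continuousOn_pi.2 fun m => ?_)
    refine (continuous_coeff_herglotzSeries m).comp_continuousOn
      (continuousOn_const.div continuousOn_id fun z hz => ?_)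
    rintro rfl
    exact hr₀.ne (norm_zero.symm.trans (mem_sphere_zero_iff_norm.1 hz))
  have hmean : (fun m : Fin n => coeff m (maclaurinSeries P) * (r : ℂ) ^ (m : ℕ))
      = circleAverage v 0 r := by
    funext m
    rw [← circleAverage_re_mul_coeff_herglotzSeries hr₀ hd hP.im_zero]
    simp_rw [← Complex.real_smul]
    exact (ContinuousLinearMap.proj (R := ℝ) m).circleAverage_comp_comm hv.circleIntegrable'
  rw [hmean, ← Φ.circleAverage_comp_comm hv.circleIntegrable']
  refine circleAverage_mono_on_of_le_circle
    (Φ.continuous.comp_continuousOn hv).circleIntegrable' fun z hz => ?_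
  rw [abs_of_pos hr₀, mem_sphere_zero_iff_norm] at hz
  have hnorm : ‖(r : ℂ) / z‖ = 1 := by
    rw [norm_div, hz, Complex.norm_real, norm_of_nonneg hr₀.le, div_self hr₀.ne']
  have hz₁ : z ∈ ball (0 : ℂ) 1 := by rwa [mem_ball_zero_iff, hz]
  rw [Function.comp_apply, map_smul]
  exact mul_nonpos_of_nonneg_of_nonpos (hP.re_nonneg z hz₁) (h _ hnorm)

theorem map_coeff_nonpos (hP : IsCaratheodory P) {n : ℕ} (Φ : (Fin n → ℂ) →L[ℝ] ℝ)
    (h : ∀ κ : ℂ, ‖κ‖ = 1 → Φ (fun m => coeff m (herglotzSeries κ)) ≤ 0) :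
    Φ (fun m => coeff m (maclaurinSeries P)) ≤ 0 := by
  have hcont : Continuous fun r : ℝ =>
      Φ (fun m => coeff m (maclaurinSeries P) * (r : ℂ) ^ (m : ℕ)) :=
    Φ.continuous.comp (by fun_prop)
  have hlim := (hcont.tendsto 1).mono_left (nhdsWithin_le_nhds (s := Iio 1))
  simp only [Complex.ofReal_one, one_pow, mul_one] at hlim
  refine le_of_tendsto hlim ?_
  filter_upwards [Ioo_mem_nhdsLT one_pos] with r hr
  exact hP.map_coeff_mul_pow_nonpos Φ h hr.1 hr.2

theorem map_maclaurinSeries_nonpos (hP : IsCaratheodory P) (n : ℕ) (Φ : ℂ⟦X⟧ →ₗ[ℝ] ℝ)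
    (hΦ : ∀ Q : ℂ⟦X⟧, (∀ m < n, coeff m Q = 0) → Φ Q = 0)
    (h : ∀ κ : ℂ, ‖κ‖ = 1 → Φ (herglotzSeries κ) ≤ 0) : Φ (maclaurinSeries P) ≤ 0 := by
  let ι : (Fin n → ℂ) →ₗ[ℝ] ℂ⟦X⟧ :=
    ∑ m : Fin n, (PowerSeries.monomial m.1).restrictScalars ℝ ∘ₗ LinearMap.proj m
  have hι (Q : ℂ⟦X⟧) : Φ (ι fun m => coeff m Q) = Φ Q := by
    rw [← sub_eq_zero, ← map_sub]
    refine hΦ _ fun m hm => ?_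
    rw [map_sub, sub_eq_zero, LinearMap.sum_apply, map_sum, Finset.sum_eq_single ⟨m, hm⟩]
    · exact coeff_monomial_same m _
    · exact fun j _ hj => (coeff_monomial _ _ _).trans (if_neg fun hjm => hj (Fin.ext hjm.symm))
    · exact fun hm' => absurd (Finset.mem_univ _) hm'
  rw [← hι]
  refine hP.map_coeff_nonpos (LinearMap.toContinuousLinearMap (Φ ∘ₗ ι)) fun κ hκ => ?_
  exact (hι (herglotzSeries κ)).trans_le (h κ hκ)

theorem norm_coeff_le (hP : IsCaratheodory P) (n : ℕ) :
    ‖coeff n (maclaurinSeries P)‖ ≤ 2 * (P 0).re := by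
  obtain ⟨u, hu, hnorm⟩ := Complex.exists_norm_eq_mul_self (coeff n (maclaurinSeries P))
  let Φ : ℂ⟦X⟧ →ₗ[ℝ] ℝ := Complex.reLm ∘ₗ
    (u • coeff n - (2 : ℂ) • coeff (R := ℂ) 0).restrictScalars ℝ
  have hΦ (Q : ℂ⟦X⟧) : Φ Q = (u * coeff n Q).re - 2 * (coeff 0 Q).re := by
    simp [Φ]
  have hle := hP.map_maclaurinSeries_nonpos (n + 1) Φ
    (fun Q hQ => by rw [hΦ, hQ n n.lt_succ_self, hQ 0 n.succ_pos]; simp) fun κ hκ => ?_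
  · rw [hΦ, ← hnorm, Complex.ofReal_re, coeff_zero_maclaurinSeries] at hle
    linarith
  · have hcoeff : ‖coeff n (herglotzSeries κ)‖ ≤ 2 := by
      rw [herglotzSeries, coeff_mk]
      split_ifs <;> simp [hκ]
    have hre := (Complex.re_le_norm (u * coeff n (herglotzSeries κ))).trans_eq (norm_mul _ _)
    rw [hu, one_mul] at hre
    rw [hΦ, herglotzSeries, coeff_mk (n := 0), if_pos rfl, Complex.one_re, ← herglotzSeries]
    linarith

end IsCaratheodory

end Caratheodory

section TaylorRemainder

variable {E F : Type*} [NormedAddCommGroup E] [NormedSpace ℂ E] [NormedAddCommGroup F]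
  [NormedSpace ℂ F] {f : E → F} {c z : E} {R C : ℝ}

theorem norm_sub_sub_fderiv_le_of_mapsTo_ball (hd : DifferentiableOn ℂ f (ball c R))
    (hm : MapsTo f (ball c R) (closedBall (f c) C)) (hz : z ∈ ball c R) :
    ‖f z - f c - fderiv ℂ f c (z - c)‖ ≤ 2 * C * (‖z - c‖ / R) ^ 2 := by
  have hR : 0 < R := nonempty_ball.1 ⟨z, hz⟩
  let g : E → F := fun y => f y - fderiv ℂ f c (y - c)
  have hgc : g c = f c := by simp only [g, sub_self, map_zero, sub_zero]
  have hg_sub (y : E) : g y - g c = f y - f c - fderiv ℂ f c (y - c) := by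
    rw [hgc]
    exact sub_right_comm _ _ _
  have hlin : Differentiable ℂ fun y => fderiv ℂ f c (y - c) :=
    (fderiv ℂ f c).differentiable.comp (differentiable_id.sub_const c)
  have hfderiv {y : E} (hy : y ∈ ball c R) : ‖fderiv ℂ f c (y - c)‖ ≤ C :=
    calc ‖fderiv ℂ f c (y - c)‖ ≤ C / R * R :=
          (fderiv ℂ f c).le_of_opNorm_le_of_le
            (Complex.norm_fderiv_le_div_of_mapsTo_ball hd hm hR) (mem_ball_iff_norm.1 hy).le
      _ = C := div_mul_cancel₀ C hR.ne'
  have hmg : MapsTo g (ball c R) (closedBall (g c) (2 * C)) := fun y hy => by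
    rw [mem_closedBall_iff_norm, hg_sub, two_mul]
    exact norm_sub_le_of_le (mem_closedBall_iff_norm.1 (hm hy)) (hfderiv hy)
  have ho : (g · - g c) =o[nhds c] fun y => ‖y - c‖ ^ 1 := by
    simp only [hg_sub, pow_one]
    exact (hd.differentiableAt (ball_mem_nhds c hR)).hasFDerivAt.isLittleO.norm_right
  rw [← hg_sub, ← dist_eq_norm, ← dist_eq_norm]
  exact Complex.dist_le_mul_div_pow_of_mapsTo_ball_of_isLittleO
    (hd.sub hlin.differentiableOn) hmg ho hz

end TaylorRemainder

section SchwarzMap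

open PowerSeries

/-- The self-map `z ↦ z * exp (-p z)` of the disc attached to a Carathéodory function `p`. -/
def schwarzMap (p : ℂ → ℂ) (z : ℂ) : ℂ := z * Complex.exp (-p z)

theorem schwarzMap_zero (p : ℂ → ℂ) : schwarzMap p 0 = 0 := zero_mul _

theorem schwarzMap_schwarzMap (p q : ℂ → ℂ) (z : ℂ) :
    schwarzMap p (schwarzMap q z) = schwarzMap (fun w => q w + p (schwarzMap q w)) z := by
  simp only [schwarzMap]
  rw [mul_assoc, ← Complex.exp_add, neg_add]

namespace IsCaratheodory

variable {p q : ℂ → ℂ} {z : ℂ} {r T : ℝ}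

theorem apply_zero (hp : IsCaratheodory p) : p 0 = ((p 0).re : ℂ) :=
  Complex.ext rfl hp.im_zero

theorem re_zero_nonneg (hp : IsCaratheodory p) : 0 ≤ (p 0).re :=
  hp.re_nonneg 0 (mem_ball_self one_pos)

theorem norm_apply_le (hp : IsCaratheodory p) (hr : r < 1) (hz : ‖z‖ ≤ r) :
    ‖p z‖ ≤ 2 * (p 0).re * (1 - r)⁻¹ :=
  norm_le_of_norm_coeff_maclaurinSeries_le hp.differentiableOn hp.norm_coeff_le hr hz

theorem norm_schwarzMap_le (hp : IsCaratheodory p) (hz : z ∈ ball (0 : ℂ) 1) :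
    ‖schwarzMap p z‖ ≤ ‖z‖ := by
  rw [schwarzMap, norm_mul, Complex.norm_exp, Complex.neg_re]
  exact mul_le_of_le_one_right (norm_nonneg z)
    (Real.exp_le_one_iff.2 (neg_nonpos.2 (hp.re_nonneg z hz)))

theorem mapsTo_schwarzMap (hp : IsCaratheodory p) : MapsTo (schwarzMap p) (ball 0 1) (ball 0 1) :=
  fun _ hz => mem_ball_zero_iff.2 ((hp.norm_schwarzMap_le hz).trans_lt (mem_ball_zero_iff.1 hz))

theorem differentiableOn_schwarzMap (hp : IsCaratheodory p) :
    DifferentiableOn ℂ (schwarzMap p) (ball 0 1) :=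
  differentiableOn_id.mul hp.differentiableOn.neg.cexp

theorem add_comp_schwarzMap (hp : IsCaratheodory p) (hq : IsCaratheodory q) :
    IsCaratheodory fun z => q z + p (schwarzMap q z) where
  differentiableOn := hq.differentiableOn.add
    (hp.differentiableOn.comp hq.differentiableOn_schwarzMap hq.mapsTo_schwarzMap)
  re_nonneg z hz := add_nonneg (hq.re_nonneg z hz) (hp.re_nonneg _ (hq.mapsTo_schwarzMap hz))
  im_zero := by rw [schwarzMap_zero, Complex.add_im, hq.im_zero, hp.im_zero, add_zero]

end IsCaratheodory

theorem norm_comp_mul_exp_neg_sub_add_le {f : ℂ → ℂ} {M : ℝ} {a z : ℂ}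
    (hf : DifferentiableOn ℂ f (ball 0 1)) (hM : ∀ w, ‖w‖ ≤ 3 / 4 → ‖f w‖ ≤ M)
    (hz : ‖z‖ ≤ 1 / 2) (ha : ‖a‖ < 1 / 4) :
    ‖f (z * Complex.exp (-a)) - f z + a * (z * deriv f z)‖ ≤ 64 * M * ‖a‖ ^ 2 := by
  let g : ℂ → ℂ := fun b => f (z * Complex.exp (-b))
  have hexp : Real.exp (1 / 4) ≤ 3 / 2 := by
    have hlt := Real.exp_bound_div_one_sub_of_interval (x := 1 / 4) (by norm_num) (by norm_num)
    exact hlt.trans (by norm_num)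
  have hmul {b : ℂ} (hb : b ∈ ball (0 : ℂ) (1 / 4)) : ‖z * Complex.exp (-b)‖ ≤ 3 / 4 := by
    rw [mem_ball_zero_iff, ← norm_neg] at hb
    calc ‖z * Complex.exp (-b)‖ ≤ 1 / 2 * (3 / 2) :=
          norm_mul_le_of_le hz <| (Complex.norm_exp_le_exp_norm _).trans
            ((Real.exp_le_exp.2 hb.le).trans hexp)
      _ = 3 / 4 := by norm_num
  have hderiv {b : ℂ} (hb : b ∈ ball (0 : ℂ) (1 / 4)) : HasDerivAt g
      (deriv f (z * Complex.exp (-b)) * (z * (Complex.exp (-b) * -1))) b :=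
    (hf.differentiableAt (isOpen_ball.mem_nhds (mem_ball_zero_iff.2
      ((hmul hb).trans_lt (by norm_num))))).hasDerivAt.comp b
        (((hasDerivAt_id b).neg.cexp).const_mul z)
  have h₀ : (0 : ℂ) ∈ ball (0 : ℂ) (1 / 4) := mem_ball_self (by norm_num)
  have hmaps : MapsTo g (ball 0 (1 / 4)) (closedBall (g 0) (2 * M)) := fun b hb => by
    rw [mem_closedBall_iff_norm, two_mul]
    exact norm_sub_le_of_le (hM _ (hmul hb)) (hM _ (hmul h₀))
  have hrem := norm_sub_sub_fderiv_le_of_mapsTo_ball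
    (fun b hb => (hderiv hb).differentiableAt.differentiableWithinAt) hmaps
    (mem_ball_zero_iff.2 ha)
  rw [(hderiv h₀).hasFDerivAt.fderiv, sub_zero] at hrem
  calc ‖f (z * Complex.exp (-a)) - f z + a * (z * deriv f z)‖
      = ‖_‖ := by simp [g, mul_comm z]
    _ ≤ 2 * (2 * M) * (‖a‖ / (1 / 4)) ^ 2 := hrem
    _ = 64 * M * ‖a‖ ^ 2 := by ring

theorem maclaurinSeries_add_comp_schwarzMap_sub {p q : ℂ → ℂ} (hp : AnalyticAt ℂ p 0)
    (hq : AnalyticAt ℂ q 0) :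
    (maclaurinSeries fun z => q z + p (schwarzMap q z)) - maclaurinSeries p
        - (1 - X * d⁄dX ℂ (maclaurinSeries p)) * maclaurinSeries q
      = maclaurinSeries fun z => p (schwarzMap q z) - p z + q z * (z * deriv p z) := by
  have hcomp : AnalyticAt ℂ (p ∘ schwarzMap q) 0 :=
    AnalyticAt.comp (by rwa [schwarzMap_zero]) (analyticAt_id.mul hq.neg.cexp)
  have hderiv := analyticAt_id.mul hp.deriv
  change maclaurinSeries (q + p ∘ schwarzMap q) - _ - _ =
    maclaurinSeries (p ∘ schwarzMap q - p + q * (id * deriv p))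
  rw [maclaurinSeries_add hq hcomp, maclaurinSeries_add (hcomp.sub hp) (hq.mul hderiv),
    maclaurinSeries_sub hcomp hp, maclaurinSeries_mul hq hderiv,
    maclaurinSeries_mul analyticAt_id hp.deriv, maclaurinSeries_id, maclaurinSeries_deriv]
  ring

theorem IsCaratheodory.norm_coeff_add_comp_schwarzMap_sub_le {p q : ℂ → ℂ} {T : ℝ}
    (hp : IsCaratheodory p) (hpT : (p 0).re ≤ T) (hq : IsCaratheodory q)
    (hq₁ : (q 0).re < 1 / 16) (k : ℕ) :
    ‖coeff k (maclaurinSeries fun z => q z + p (schwarzMap q z)) - coeff k (maclaurinSeries p)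
      - coeff k ((1 - X * d⁄dX ℂ (maclaurinSeries p)) * maclaurinSeries q)‖
      ≤ 8192 * T * 2 ^ k * (q 0).re ^ 2 := by
  let g : ℂ → ℂ := fun z => p (schwarzMap q z) - p z + q z * (z * deriv p z)
  have hcomp : DifferentiableOn ℂ (p ∘ schwarzMap q) (ball 0 1) :=
    hp.differentiableOn.comp hq.differentiableOn_schwarzMap hq.mapsTo_schwarzMap
  have hderiv : DifferentiableOn ℂ (deriv p) (ball 0 1) := hp.differentiableOn.deriv isOpen_ball
  have hg : DifferentiableOn ℂ g (ball 0 1) := (hcomp.sub hp.differentiableOn).add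
    (hq.differentiableOn.mul (differentiableOn_id.mul hderiv))
  have hbound : ∀ z ∈ sphere (0 : ℂ) (1 / 2), ‖g z‖ ≤ 8192 * T * (q 0).re ^ 2 := by
    intro z hz
    have hz := (mem_sphere_zero_iff_norm.1 hz).le
    have hqz : ‖q z‖ ≤ 4 * (q 0).re := by
      linarith [hq.norm_apply_le (by norm_num) hz]
    have hM (w : ℂ) (hw : ‖w‖ ≤ 3 / 4) : ‖p w‖ ≤ 8 * T := by
      linarith [hp.norm_apply_le (by norm_num) hw]
    have hT : 0 ≤ T := hp.re_zero_nonneg.trans hpT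
    calc ‖g z‖ ≤ 64 * (8 * T) * ‖q z‖ ^ 2 :=
          norm_comp_mul_exp_neg_sub_add_le hp.differentiableOn hM hz (by linarith)
      _ ≤ 64 * (8 * T) * (4 * (q 0).re) ^ 2 := by gcongr
      _ = 8192 * T * (q 0).re ^ 2 := by ring
  rw [← map_sub, ← map_sub, maclaurinSeries_add_comp_schwarzMap_sub hp.analyticAt_zero
    hq.analyticAt_zero]
  have hcl := hg.diffContOnCl_ball (closedBall_subset_ball (x := (0 : ℂ)) one_half_lt_one)
  calc ‖coeff k (maclaurinSeries g)‖ ≤ 8192 * T * (q 0).re ^ 2 / (1 / 2) ^ k :=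
        norm_coeff_maclaurinSeries_le one_half_pos hcl hbound k
    _ = 8192 * T * 2 ^ k * (q 0).re ^ 2 := by
        rw [one_div, inv_pow, div_inv_eq_mul]
        ring

end SchwarzMap

section MilinFunctional

open PowerSeries Asymptotics Filter ComplexConjugate

/-- The Milin functional of `p`, weighted by de Branges' system of weights at time `t`. -/
def milinFunctional (n : ℕ) (p : ℂ⟦X⟧) (t : ℝ) : ℝ :=
  ∑ i ∈ Finset.range n, (deBrangesWeight n (i + 1)).eval (Real.exp (-t))
    * ((i + 1 : ℕ) * ‖coeff (i + 1) p‖ ^ 2 - 4 / (i + 1 : ℕ))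

theorem coeffVariation_eq_zero (p : ℂ⟦X⟧) {Q : ℂ⟦X⟧} {k : ℕ} (hQ : ∀ m ≤ k, coeff m Q = 0) :
    coeffVariation p k Q = 0 := by
  have hcoeff : coeff k ((1 - X * d⁄dX ℂ p) * Q) = 0 := by
    rw [coeff_mul]
    refine Finset.sum_eq_zero fun x hx => ?_
    rw [hQ _ (le_add_self.trans_eq (Finset.HasAntidiagonal.mem_antidiagonal.1 hx)), mul_zero]
  rw [coeffVariation_apply, hcoeff, mul_zero, Complex.zero_re, mul_zero]

theorem IsCaratheodory.deBranges_variation_nonpos {q : ℂ → ℂ} (hq : IsCaratheodory q) (n : ℕ)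
    (p : ℂ⟦X⟧) {t : ℝ} (ht : 0 ≤ t) :
    ∑ i ∈ Finset.range n,
      ((q 0).re * ((i + 1 : ℕ) * (chebyshevFourier n (i + 1 : ℕ)).eval (Real.exp (-t))
          * ((i + 1 : ℕ) * ‖coeff (i + 1) p‖ ^ 2 - 4 / (i + 1 : ℕ)))
        + 2 * ((deBrangesWeight n (i + 1)).eval (Real.exp (-t))
          * coeffVariation p (i + 1) (maclaurinSeries q))) ≤ 0 := by
  let y := Real.exp (-t)
  obtain ⟨hy₀, hy₁⟩ := exp_neg_mem_Icc ht
  let c (i : ℕ) : ℝ := (i + 1 : ℕ) * (chebyshevFourier n (i + 1 : ℕ)).eval y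
    * ((i + 1 : ℕ) * ‖coeff (i + 1) p‖ ^ 2 - 4 / (i + 1 : ℕ))
  let Φ : ℂ⟦X⟧ →ₗ[ℝ] ℝ := ∑ i ∈ Finset.range n,
    (c i • Complex.reLm ∘ₗ (coeff (R := ℂ) 0).restrictScalars ℝ
      + (2 * (deBrangesWeight n (i + 1)).eval y) • coeffVariation p (i + 1))
  have hΦ (Q : ℂ⟦X⟧) : Φ Q = ∑ i ∈ Finset.range n, ((coeff 0 Q).re * c i
      + 2 * ((deBrangesWeight n (i + 1)).eval y * coeffVariation p (i + 1) Q)) := by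
    simp only [Φ, LinearMap.sum_apply]
    refine Finset.sum_congr rfl fun i _ => ?_
    rw [mul_comm _ (c i), ← mul_assoc]
    rfl
  have hneg := hq.map_maclaurinSeries_nonpos (n + 1) Φ (fun Q hQ => ?_) fun κ hκ => ?_
  · rwa [hΦ, coeff_zero_maclaurinSeries] at hneg
  · rw [hΦ]
    refine Finset.sum_eq_zero fun i hi => ?_
    have hin := Finset.mem_range.1 hi
    rw [hQ 0 n.succ_pos, coeffVariation_eq_zero p fun m hm => hQ m (by omega)]
    simp only [Complex.zero_re, zero_mul, mul_zero, add_zero]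
  · rw [hΦ]
    have h₀ : coeff 0 (herglotzSeries κ) = 1 := by rw [herglotzSeries, coeff_mk, if_pos rfl]
    simp only [h₀, Complex.one_re, one_mul]
    exact deBranges_variation_herglotzSeries_nonpos
      (l := fun k => (chebyshevFourier n (k : ℕ)).eval y)
      (τ := fun k => (deBrangesWeight n k).eval y)
      (fun k => chebyshevFourier_eval_nonneg n k hy₀ hy₁)
      (fun k hk => by
        rw [← Polynomial.eval_sub, deBrangesWeight_sub_add_one hk, Polynomial.eval_add]
        push_cast
        rfl)
      (by rw [deBrangesWeight_self_add_one, Polynomial.eval_zero])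
      (by rw [chebyshevFourier_eq_zero (by omega), Polynomial.eval_zero]) p hκ

theorem isBigO_mul_norm_add_sq_sub {ι : Type*} {l : Filter ι} {W W' w h : ι → ℝ}
    {A B E : ι → ℂ} (k m : ℝ) (hA : A =O[l] fun _ => (1 : ℝ)) (hB : B =O[l] h)
    (hE : E =O[l] fun x => h x ^ 2) (hh : h =O[l] fun _ => (1 : ℝ))
    (hw : w =O[l] fun _ => (1 : ℝ)) (hW' : W' =O[l] fun _ => (1 : ℝ))
    (hW : (fun x => W x - W' x - h x * w x) =O[l] fun x => h x ^ 2) :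
    (fun x => W x * (k * ‖A x + B x + E x‖ ^ 2 - m) - (W' x * (k * ‖A x‖ ^ 2 - m)
        + (h x * (w x * (k * ‖A x‖ ^ 2 - m)) + 2 * (W' x * (k * (conj (A x) * B x).re)))))
      =O[l] fun x => h x ^ 2 := by
  have hre {f g : ι → ℂ} {u : ι → ℝ} (hf : f =O[l] fun _ => (1 : ℝ)) (hg : g =O[l] u) :
      (fun x => (conj (f x) * g x).re) =O[l] u := by
    refine (IsBigO.of_norm_left ?_).trans ((hf.norm_left.mul hg.norm_left).congr_right (by simp))
    refine IsBigO.of_bound' (Eventually.of_forall fun x => ?_)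
    simpa using Complex.abs_re_le_norm (conj (f x) * g x)
  have hsq : (fun x => h x ^ 2) =O[l] h := by
    simpa [sq] using (isBigO_refl h l).mul hh
  have hdiff : (fun x => W x - W' x) =O[l] h := by
    have hmul := (isBigO_refl h l).mul hw
    simp only [mul_one] at hmul
    simpa using (hW.trans hsq).add hmul
  have hW₁ : W =O[l] fun _ => (1 : ℝ) := by simpa using (hdiff.trans hh).add hW'
  have hV : (fun x => k * ‖A x‖ ^ 2 - m) =O[l] fun _ => (1 : ℝ) := by
    have hA₂ := hA.norm_left.pow 2
    simp only [one_pow] at hA₂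
    exact (hA₂.const_mul_left k).sub (isBigO_const_const m one_ne_zero l)
  have hD : (fun x => ‖B x + E x‖ ^ 2) =O[l] fun x => h x ^ 2 :=
    (hB.add (hE.trans hsq)).norm_left.pow 2
  have h₁ := hW.mul hV
  have h₂ := (hdiff.mul (hre hA hB)).const_mul_left (2 * k)
  have h₃ := (hW₁.mul (((hre hA hE).const_mul_left 2).add hD)).const_mul_left k
  simp only [mul_one, one_mul, ← sq] at h₁ h₂ h₃
  refine ((h₁.add h₂).add h₃).congr_left fun x => ?_
  have hexpand := norm_add_sq_real (A x) (B x + E x)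
  rw [real_inner_eq_re_inner ℂ, RCLike.inner_apply, ← add_assoc, mul_comm (B x + E x), mul_add]
    at hexpand
  simp only [map_add, RCLike.re_to_complex] at hexpand
  rw [hexpand]
  ring

/-- The triples `(p, q, t)` for which the effect on the Milin functional of composing with
`schwarzMap q` is estimated uniformly, up to an error quadratic in `(q 0).re`. -/
def loewnerSteps (T : ℝ) : Set ((ℂ → ℂ) × (ℂ → ℂ) × ℝ) :=
  {x | IsCaratheodory x.1 ∧ IsCaratheodory x.2.1 ∧ (x.1 0).re ≤ T ∧ (x.2.1 0).re < 1 / 16 ∧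
    0 ≤ x.2.2}

theorem isBigO_coeff_loewnerSteps (T : ℝ) (k : ℕ) :
    (fun x => coeff k (maclaurinSeries x.1)) =O[𝓟 (loewnerSteps T)] fun _ => (1 : ℝ) :=
  isBigO_principal.2 ⟨2 * T, fun _ ⟨hp, _, hpT, _⟩ => by
    rw [norm_one]
    linarith [hp.norm_coeff_le k]⟩

theorem isBigO_re_zero_loewnerSteps (T : ℝ) :
    (fun x => (x.2.1 0).re) =O[𝓟 (loewnerSteps T)] fun _ => (1 : ℝ) :=
  isBigO_principal.2 ⟨1, fun x ⟨_, hq, _, hq₁, _⟩ => by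
    rw [Real.norm_of_nonneg hq.re_zero_nonneg, norm_one]
    linarith⟩

theorem isBigO_coeff_mul_loewnerSteps (T : ℝ) (k : ℕ) :
    (fun x => coeff k ((1 - X * d⁄dX ℂ (maclaurinSeries x.1)) * maclaurinSeries x.2.1))
      =O[𝓟 (loewnerSteps T)] fun x => (x.2.1 0).re := by
  simp only [coeff_mul]
  refine IsBigO.fun_sum fun (ij : ℕ × ℕ) _ => ?_
  have hfactor : (fun x : (ℂ → ℂ) × (ℂ → ℂ) × ℝ =>
      coeff ij.1 (1 - X * d⁄dX ℂ (maclaurinSeries x.1))) =O[𝓟 (loewnerSteps T)]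
        fun _ => (1 : ℝ) := by
    simp only [map_sub]
    refine (isBigO_const_const (coeff ij.1 (1 : ℂ⟦X⟧)) one_ne_zero _).sub ?_
    rcases ij.1 with _ | m
    · simpa only [coeff_zero_X_mul] using isBigO_zero _ _
    · simp only [coeff_succ_X_mul, coeff_derivative, mul_comm _ ((m : ℂ) + 1)]
      exact (isBigO_coeff_loewnerSteps T (m + 1)).const_mul_left _
  have hq : (fun x : (ℂ → ℂ) × (ℂ → ℂ) × ℝ => coeff ij.2 (maclaurinSeries x.2.1))
      =O[𝓟 (loewnerSteps T)] fun x => (x.2.1 0).re :=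
    isBigO_principal.2 ⟨2, fun _ ⟨_, hq, _⟩ => by
      rw [Real.norm_of_nonneg hq.re_zero_nonneg]
      exact hq.norm_coeff_le _⟩
  simpa only [one_mul] using hfactor.mul hq

theorem isBigO_coeff_remainder_loewnerSteps (T : ℝ) (k : ℕ) :
    (fun x => coeff k (maclaurinSeries fun z => x.2.1 z + x.1 (schwarzMap x.2.1 z))
        - coeff k (maclaurinSeries x.1)
        - coeff k ((1 - X * d⁄dX ℂ (maclaurinSeries x.1)) * maclaurinSeries x.2.1))
      =O[𝓟 (loewnerSteps T)] fun x => (x.2.1 0).re ^ 2 :=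
  isBigO_principal.2 ⟨8192 * T * 2 ^ k, fun x ⟨hp, hq, hpT, hq₁, _⟩ => by
    rw [Real.norm_of_nonneg (sq_nonneg _)]
    exact hp.norm_coeff_add_comp_schwarzMap_sub_le hpT hq hq₁ k⟩

theorem isBigO_milinFunctional_term_loewnerSteps (T : ℝ) {n i : ℕ} (hi : i < n) :
    (fun x : (ℂ → ℂ) × (ℂ → ℂ) × ℝ =>
      (deBrangesWeight n (i + 1)).eval (Real.exp (-x.2.2)) * ((i + 1 : ℕ)
          * ‖coeff (i + 1) (maclaurinSeries fun z => x.2.1 z + x.1 (schwarzMap x.2.1 z))‖ ^ 2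
          - 4 / (i + 1 : ℕ))
        - ((deBrangesWeight n (i + 1)).eval (Real.exp (-(x.2.2 + (x.2.1 0).re)))
            * ((i + 1 : ℕ) * ‖coeff (i + 1) (maclaurinSeries x.1)‖ ^ 2 - 4 / (i + 1 : ℕ))
          + ((x.2.1 0).re * ((i + 1 : ℕ)
              * (chebyshevFourier n (i + 1 : ℕ)).eval (Real.exp (-(x.2.2 + (x.2.1 0).re)))
              * ((i + 1 : ℕ) * ‖coeff (i + 1) (maclaurinSeries x.1)‖ ^ 2 - 4 / (i + 1 : ℕ)))
            + 2 * ((deBrangesWeight n (i + 1)).eval (Real.exp (-(x.2.2 + (x.2.1 0).re)))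
              * coeffVariation (maclaurinSeries x.1) (i + 1) (maclaurinSeries x.2.1)))))
      =O[𝓟 (loewnerSteps T)] fun x => (x.2.1 0).re ^ 2 := by
  have htime : Tendsto (fun x : (ℂ → ℂ) × (ℂ → ℂ) × ℝ => x.2.2 + (x.2.1 0).re)
      (𝓟 (loewnerSteps T)) (𝓟 (Ici 0)) :=
    tendsto_principal_principal.2 fun x ⟨_, hq, _, _, ht⟩ => add_nonneg ht hq.re_zero_nonneg
  have htimes : Tendsto (fun x : (ℂ → ℂ) × (ℂ → ℂ) × ℝ => (x.2.2, (x.2.1 0).re))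
      (𝓟 (loewnerSteps T)) (𝓟 (Ici 0 ×ˢ Ici 0)) :=
    tendsto_principal_principal.2 fun x ⟨_, hq, _, _, ht⟩ => ⟨ht, hq.re_zero_nonneg⟩
  have hW := (isBigO_eval_exp_neg_taylor (deBrangesWeight n (i + 1))).comp_tendsto htimes
  simp only [X_mul_derivative_deBrangesWeight (show i + 1 ≤ n + 1 by omega),
    Polynomial.eval_mul, Polynomial.eval_natCast] at hW
  have hw := ((isBigO_eval_exp_neg (chebyshevFourier n (i + 1 : ℕ))).comp_tendsto
    htime).const_mul_left ((i + 1 : ℕ) : ℝ)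
  have hW' := (isBigO_eval_exp_neg (deBrangesWeight n (i + 1))).comp_tendsto htime
  refine (isBigO_mul_norm_add_sq_sub (i + 1 : ℕ) (4 / (i + 1 : ℕ))
    (isBigO_coeff_loewnerSteps T (i + 1)) (isBigO_coeff_mul_loewnerSteps T (i + 1))
    (isBigO_coeff_remainder_loewnerSteps T (i + 1)) (isBigO_re_zero_loewnerSteps T) hw hW'
    hW).congr_left fun x => ?_
  simp only [add_add_sub_cancel, add_sub_cancel, coeffVariation_apply, Function.comp_apply]

theorem exists_milinFunctional_add_comp_schwarzMap_le (n : ℕ) (T : ℝ) :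
    ∃ C : ℝ, ∀ p q : ℂ → ℂ, IsCaratheodory p → IsCaratheodory q → (p 0).re ≤ T →
      (q 0).re < 1 / 16 → ∀ t, 0 ≤ t →
        milinFunctional n (maclaurinSeries fun z => q z + p (schwarzMap q z)) t
          ≤ milinFunctional n (maclaurinSeries p) (t + (q 0).re) + C * (q 0).re ^ 2 := by
  obtain ⟨C, hC⟩ := isBigO_principal.1 <| IsBigO.fun_sum fun i (hi : i ∈ Finset.range n) =>
    isBigO_milinFunctional_term_loewnerSteps T (Finset.mem_range.1 hi)
  refine ⟨C, fun p q hp hq hpT hq₁ t ht => ?_⟩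
  have hstep := (le_abs_self _).trans (hC (p, q, t) ⟨hp, hq, hpT, hq₁, ht⟩)
  have hvar := hq.deBranges_variation_nonpos n (maclaurinSeries p)
    (add_nonneg ht hq.re_zero_nonneg)
  rw [Finset.sum_sub_distrib, Finset.sum_add_distrib,
    Real.norm_of_nonneg (sq_nonneg _)] at hstep
  simp only [milinFunctional]
  linarith

end MilinFunctional

section NormalFamilies

open PowerSeries Filter Topology

variable {ι : Type*} {l : Filter ι} {F : ι → ℂ → ℂ} {g : ℂ → ℂ}

theorem tendstoLocallyUniformlyOn_iteratedDeriv {U : Set ℂ} (hU : IsOpen U)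
    (hF : ∀ i, DifferentiableOn ℂ (F i) U) (h : TendstoLocallyUniformlyOn F g l U) (k : ℕ) :
    TendstoLocallyUniformlyOn (fun i => iteratedDeriv k (F i)) (iteratedDeriv k g) l U := by
  have hdiff (i : ι) (j : ℕ) : DifferentiableOn ℂ (iteratedDeriv j (F i)) U := by
    induction j with
    | zero => simpa only [iteratedDeriv_zero] using hF i
    | succ j ih => simpa only [iteratedDeriv_succ] using ih.deriv hU
  induction k with
  | zero => simpa only [iteratedDeriv_zero] using h
  | succ k ih =>
    simpa only [iteratedDeriv_succ, Function.comp_def] using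
      ih.deriv (Eventually.of_forall fun i => hdiff i k) hU

theorem tendsto_coeff_maclaurinSeries (hF : ∀ i, DifferentiableOn ℂ (F i) (ball 0 1))
    (h : TendstoLocallyUniformlyOn F g l (ball 0 1)) (k : ℕ) :
    Tendsto (fun i => coeff k (maclaurinSeries (F i))) l (𝓝 (coeff k (maclaurinSeries g))) := by
  simp only [coeff_maclaurinSeries]
  exact ((tendstoLocallyUniformlyOn_iteratedDeriv isOpen_ball hF h k).tendsto_at
    (mem_ball_self one_pos)).const_mul _

theorem tendstoLocallyUniformlyOn_tsum_of_tendsto_coeff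
    (hF : ∀ i, DifferentiableOn ℂ (F i) (ball 0 1)) {C : ℝ}
    (hC : ∀ i k, ‖coeff k (maclaurinSeries (F i))‖ ≤ C) {a : ℕ → ℂ} (haC : ∀ k, ‖a k‖ ≤ C)
    (ha : ∀ k, Tendsto (fun i => coeff k (maclaurinSeries (F i))) l (𝓝 (a k))) :
    TendstoLocallyUniformlyOn F (fun z => ∑' k, a k * z ^ k) l (ball 0 1) := by
  rw [tendstoLocallyUniformlyOn_iff_forall_tendsto]
  intro z hz
  obtain ⟨r, hzr, hr⟩ := exists_between (mem_ball_zero_iff.1 hz)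
  have hsum : Summable fun k : ℕ => C * r ^ k :=
    (summable_geometric_of_lt_one ((norm_nonneg z).trans hzr.le) hr).mul_left C
  have hsnd : Tendsto Prod.snd (l ×ˢ 𝓝[ball 0 1] z) (𝓝 z) :=
    tendsto_snd.mono_right nhdsWithin_le_nhds
  have hlt : ∀ᶠ y in l ×ˢ 𝓝[ball 0 1] z, ‖y.2‖ < r := hsnd.norm.eventually_lt_const hzr
  have hlim (b : ι × ℂ → ℕ → ℂ) (hb : ∀ y k, ‖b y k‖ ≤ C)
      (hba : ∀ k, Tendsto (b · k) (l ×ˢ 𝓝[ball 0 1] z) (𝓝 (a k))) :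
      Tendsto (fun y => ∑' k, b y k * y.2 ^ k) (l ×ˢ 𝓝[ball 0 1] z) (𝓝 (∑' k, a k * z ^ k)) := by
    refine tendsto_tsum_of_dominated_convergence hsum (fun k => (hba k).mul (hsnd.pow k)) ?_
    filter_upwards [hlt] with y hy k
    have hbk := hb y k
    rw [norm_mul, norm_pow]
    gcongr
    exact (norm_nonneg _).trans hbk
  have hF_lim := (hlim (fun y k => coeff k (maclaurinSeries (F y.1))) (fun y => hC y.1)
    fun k => (ha k).comp tendsto_fst).congr' <| hlt.mono fun y hy =>
      (hasSum_maclaurinSeries (hF y.1) (mem_ball_zero_iff.2 (hy.trans hr))).tsum_eq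
  have hg_lim := hlim (fun _ => a) (fun _ => haC) fun _ => tendsto_const_nhds
  exact (hg_lim.prodMk_nhds hF_lim).mono_right (nhds_le_uniformity _)

theorem exists_subseq_tendstoLocallyUniformlyOn {κ : Type*} [Countable κ] {F : κ → ℕ → ℂ → ℂ}
    (hF : ∀ i m, DifferentiableOn ℂ (F i m) (ball 0 1)) {C : κ → ℝ}
    (hC : ∀ i m k, ‖coeff k (maclaurinSeries (F i m))‖ ≤ C i) :
    ∃ φ : ℕ → ℕ, StrictMono φ ∧
      ∀ i, ∃ g, TendstoLocallyUniformlyOn (fun m => F i (φ m)) g atTop (ball 0 1) := by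
  let c (m : ℕ) (ik : κ × ℕ) : ℂ := coeff ik.2 (maclaurinSeries (F ik.1 m))
  have hcompact : IsCompact (univ.pi fun ik : κ × ℕ => closedBall (0 : ℂ) (C ik.1)) :=
    isCompact_univ_pi fun ik => isCompact_closedBall _ _
  have hc (m : ℕ) : c m ∈ univ.pi fun ik : κ × ℕ => closedBall (0 : ℂ) (C ik.1) :=
    fun ik _ => mem_closedBall_zero_iff.2 (hC ik.1 m ik.2)
  obtain ⟨a, ha, φ, hφ, hlim⟩ := hcompact.tendsto_subseq hc
  rw [tendsto_pi_nhds] at hlim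
  exact ⟨φ, hφ, fun i => ⟨_, tendstoLocallyUniformlyOn_tsum_of_tendsto_coeff
    (fun m => hF i (φ m)) (fun m => hC i (φ m))
    (fun k => mem_closedBall_zero_iff.1 (ha (i, k) (mem_univ _))) fun k => hlim (i, k)⟩⟩

theorem IsCaratheodory.of_tendstoLocallyUniformlyOn [l.NeBot] (hF : ∀ i, IsCaratheodory (F i))
    (h : TendstoLocallyUniformlyOn F g l (ball 0 1)) : IsCaratheodory g where
  differentiableOn :=
    h.differentiableOn (Eventually.of_forall fun i => (hF i).differentiableOn) isOpen_ball
  re_nonneg z hz := ge_of_tendsto ((Complex.continuous_re.tendsto _).comp (h.tendsto_at hz))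
    (Eventually.of_forall fun i => (hF i).re_nonneg z hz)
  im_zero := tendsto_nhds_unique
    ((Complex.continuous_im.tendsto _).comp (h.tendsto_at (mem_ball_self one_pos)))
    (tendsto_const_nhds.congr fun i => (hF i).im_zero.symm)

/-- Holomorphic self-maps of the unit disc which fix the origin. -/
structure IsSchwarzMap (f : ℂ → ℂ) : Prop where
  differentiableOn : DifferentiableOn ℂ f (ball 0 1)
  mapsTo : MapsTo f (ball 0 1) (ball 0 1)
  map_zero : f 0 = 0

namespace IsSchwarzMap

variable {f ψ : ℂ → ℂ}

theorem mapsTo_closedBall (hf : IsSchwarzMap f) : MapsTo f (ball 0 1) (closedBall (f 0) 1) := by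
  rw [hf.map_zero]
  exact hf.mapsTo.mono_right ball_subset_closedBall

theorem norm_apply_le (hf : IsSchwarzMap f) {z : ℂ} (hz : z ∈ ball (0 : ℂ) 1) : ‖f z‖ ≤ ‖z‖ :=
  Complex.norm_le_norm_of_mapsTo_ball hf.differentiableOn
    (hf.mapsTo.mono_right ball_subset_closedBall) hf.map_zero (mem_ball_zero_iff.1 hz)

theorem norm_deriv_zero_le_one (hf : IsSchwarzMap f) : ‖deriv f 0‖ ≤ 1 :=
  Complex.norm_deriv_le_one_of_mapsTo_ball hf.differentiableOn hf.mapsTo_closedBall one_pos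

theorem of_norm_apply_le (hd : DifferentiableOn ℂ f (ball 0 1))
    (h : ∀ z ∈ ball (0 : ℂ) 1, ‖f z‖ ≤ ‖z‖) : IsSchwarzMap f where
  differentiableOn := hd
  mapsTo z hz := mem_ball_zero_iff.2 ((h z hz).trans_lt (mem_ball_zero_iff.1 hz))
  map_zero := norm_le_zero_iff.1 ((h 0 (mem_ball_self one_pos)).trans_eq norm_zero)

theorem comp (hf : IsSchwarzMap f) (hψ : IsSchwarzMap ψ) : IsSchwarzMap (f ∘ ψ) where
  differentiableOn := hf.differentiableOn.comp hψ.differentiableOn hψ.mapsTo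
  mapsTo := hf.mapsTo.comp hψ.mapsTo
  map_zero := by rw [Function.comp_apply, hψ.map_zero, hf.map_zero]

theorem norm_coeff_le_one (hf : IsSchwarzMap f) (k : ℕ) : ‖coeff k (maclaurinSeries f)‖ ≤ 1 := by
  have hlim : Tendsto (fun r : ℝ => 1 / r ^ k) (𝓝[<] 1) (𝓝 1) := by
    have hcont : ContinuousAt (fun r : ℝ => 1 / r ^ k) 1 := by
      fun_prop (disch := norm_num)
    simpa using hcont.tendsto.mono_left nhdsWithin_le_nhds
  refine ge_of_tendsto hlim ?_
  filter_upwards [Ioo_mem_nhdsLT one_pos] with r hr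
  refine norm_coeff_maclaurinSeries_le hr.1
    (hf.differentiableOn.diffContOnCl_ball (closedBall_subset_ball hr.2)) (fun z hz => ?_) k
  exact (mem_ball_zero_iff.1 (hf.mapsTo (sphere_subset_ball hr.2 hz))).le

theorem of_tendstoLocallyUniformlyOn [l.NeBot] (hF : ∀ i, IsSchwarzMap (F i))
    (h : TendstoLocallyUniformlyOn F g l (ball 0 1)) : IsSchwarzMap g :=
  .of_norm_apply_le
    (h.differentiableOn (Eventually.of_forall fun i => (hF i).differentiableOn) isOpen_ball)
    fun _ hz => le_of_tendsto (h.tendsto_at hz).norm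
      (Eventually.of_forall fun i => (hF i).norm_apply_le hz)

end IsSchwarzMap

end NormalFamilies

section Univalent

open Filter Topology

variable {f : ℂ → ℂ} {U : Set ℂ} {z : ℂ}

theorem exists_eventually_eq_add_mul_pow (hf : AnalyticAt ℂ f z)
    (hconst : ¬∀ᶠ w in 𝓝 z, f w = f z) :
    ∃ (n : ℕ) (c : ℂ) (u : ℂ → ℂ), n ≠ 0 ∧ c ≠ 0 ∧ u z = 0 ∧ HasStrictDerivAt u 1 z ∧
      ∀ᶠ w in 𝓝 z, f w = f z + c * u w ^ n := by
  obtain ⟨n, h, hh, hhz, hfac⟩ := (AnalyticAt.exists_eventuallyEq_pow_smul_nonzero_iff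
    (hf.sub analyticAt_const)).2 fun h0 => hconst <| h0.mono fun w hw => sub_eq_zero.1 hw
  have hn : n ≠ 0 := by
    rintro rfl
    exact hhz (by simpa using hfac.self_of_nhds.symm)
  have hquot : HasStrictDerivAt (fun w => h w / h z) (deriv h z / h z) z :=
    hh.hasStrictDerivAt.div_const _
  have hroot := ((hquot.clog (by simp [hhz])).div_const (n : ℂ)).cexp
  have hsub : HasStrictDerivAt (fun w => w - z) 1 z := (hasStrictDerivAt_id z).sub_const z
  have hu := HasStrictDerivAt.fun_mul hsub hroot
  refine ⟨n, h z, _, hn, hhz, by simp, hu.congr_deriv (by simp [hhz]), ?_⟩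
  filter_upwards [hfac, hh.continuousAt.eventually_ne hhz] with w hw hhw
  have hexp : Complex.exp (Complex.log (h w / h z) / n) ^ n = h w / h z := by
    rw [← Complex.exp_nat_mul, mul_div_cancel₀ _ (Nat.cast_ne_zero.2 hn),
      Complex.exp_log (div_ne_zero hhw hhz)]
  rw [mul_pow, hexp, ← sub_eq_iff_eq_add']
  refine hw.trans ?_
  rw [smul_eq_mul]
  field_simp

theorem deriv_ne_zero_of_injOn (hU : IsOpen U) (hf : DifferentiableOn ℂ f U) (hinj : InjOn f U)
    (hz : z ∈ U) : deriv f z ≠ 0 := by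
  have hUz := hU.eventually_mem hz
  have hconst : ¬∀ᶠ w in 𝓝 z, f w = f z := fun h => by
    obtain ⟨w, ⟨hw, hwU⟩, hwz⟩ :=
      (((h.and hUz).filter_mono nhdsWithin_le_nhds).and self_mem_nhdsWithin).exists (f := 𝓝[≠] z)
    exact hwz (hinj hwU hz hw)
  obtain ⟨n, c, u, hn, hc, huz, hu, hfu⟩ :=
    exists_eventually_eq_add_mul_pow (hf.analyticAt hUz) hconst
  have himage : u '' {w | w ∈ U ∧ f w = f z + c * u w ^ n} ∈ 𝓝 (0 : ℂ) := by
    rw [← huz, ← hu.map_nhds_eq one_ne_zero]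
    exact image_mem_map (hUz.and hfu)
  have hζ := Complex.isPrimitiveRoot_exp n hn
  set ζ := Complex.exp (2 * Real.pi * Complex.I / n)
  have hrot : ∀ᶠ v in 𝓝[≠] (0 : ℂ), v ∈ u '' {w | w ∈ U ∧ f w = f z + c * u w ^ n} ∧
      ζ * v ∈ u '' {w | w ∈ U ∧ f w = f z + c * u w ^ n} ∧ v ≠ 0 := by
    have hmul : Tendsto (ζ * ·) (𝓝 0) (𝓝 0) := by
      simpa using (continuous_const_mul ζ).tendsto 0
    filter_upwards [nhdsWithin_le_nhds himage, nhdsWithin_le_nhds (hmul himage),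
      self_mem_nhdsWithin] with v h₁ h₂ h₃ using ⟨h₁, h₂, h₃⟩
  obtain ⟨_, ⟨w₁, ⟨hw₁U, hw₁⟩, rfl⟩, ⟨w₂, ⟨hw₂U, hw₂⟩, hw₁₂⟩, hne⟩ := hrot.exists
  have heq : w₂ = w₁ := hinj hw₂U hw₁U (by rw [hw₁, hw₂, hw₁₂, mul_pow, hζ.pow_eq_one, one_mul])
  have hζ_one : ζ = 1 := by
    rw [heq] at hw₁₂
    exact (mul_eq_right₀ hne).1 hw₁₂.symm
  obtain rfl : n = 1 := hζ.eq_orderOf.trans (by rw [hζ_one, orderOf_one])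
  have hderiv := (((hu.hasDerivAt.pow 1).const_mul c).const_add (f z)).congr_of_eventuallyEq hfu
  simpa [hderiv.deriv] using hc

theorem hasDerivAt_invFunOn (hU : IsOpen U) (hf : DifferentiableOn ℂ f U) (hinj : InjOn f U)
    (hz : z ∈ U) : HasDerivAt (Function.invFunOn f U) (deriv f z)⁻¹ (f z) := by
  have hleft : ∀ᶠ w in 𝓝 z, Function.invFunOn f U (f w) = w := by
    filter_upwards [hU.mem_nhds hz] with w hw using hinj.leftInvOn_invFunOn hw
  have hd := deriv_ne_zero_of_injOn hU hf hinj hz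
  have hs : HasStrictDerivAt f (deriv f z) z :=
    (hf.analyticAt (hU.mem_nhds hz)).hasStrictDerivAt
  have hmap := hs.map_nhds_eq hd
  refine HasDerivAt.of_local_left_inverse (f := f) ?_ ?_ hd ?_
  · rw [ContinuousAt, hleft.self_of_nhds, ← hmap, tendsto_map'_iff]
    exact tendsto_id.congr' (hleft.mono fun w hw => hw.symm)
  · rw [hleft.self_of_nhds]
    exact hs.hasDerivAt
  · rw [← hmap, eventually_map]
    exact hleft.mono fun w hw => congrArg f hw

theorem exists_hasDerivAt_log (hUc : IsSimplyConnected U) (hU : IsOpen U)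
    (hf : DifferentiableOn ℂ f U) (hne : ∀ z ∈ U, f z ≠ 0) :
    ∃ L : ℂ → ℂ, ∀ z ∈ U, Complex.exp (L z) = f z ∧ HasDerivAt L (deriv f z / f z) z := by
  obtain ⟨L, hL, hexp⟩ := Complex.exists_continuousOn_eqOn_exp_comp hUc hU hf.continuousOn
    (by rintro ⟨z, hz, h⟩; exact hne z hz h)
  refine ⟨L, fun z hz => ⟨hexp hz, ?_⟩⟩
  have hexp_z : Complex.exp (L z) = f z := hexp hz
  have hs : HasStrictDerivAt Complex.exp (f z) (L z) :=
    hexp_z ▸ Complex.hasStrictDerivAt_exp (L z)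
  have hs' := (hs.to_localInverse (hne z hz)).hasDerivAt
  rw [hexp_z] at hs'
  refine ((hs'.comp z (hf.differentiableAt (hU.mem_nhds hz)).hasDerivAt).congr_deriv
    (inv_mul_eq_div _ _)).congr_of_eventuallyEq ?_
  have hleft := (hL.continuousAt (hU.mem_nhds hz)).eventually
    (hs.hasStrictFDerivAt_equiv (hne z hz)).eventually_left_inverse
  filter_upwards [hleft, hU.mem_nhds hz] with w hw hwU
  have hexp_w : Complex.exp (L w) = f w := hexp hwU
  rw [hexp_w] at hw
  exact hw.symm

theorem exists_differentiableOn_sq_eq (hUc : IsSimplyConnected U) (hU : IsOpen U)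
    (hf : DifferentiableOn ℂ f U) (hne : ∀ z ∈ U, f z ≠ 0) :
    ∃ s : ℂ → ℂ, DifferentiableOn ℂ s U ∧ ∀ z ∈ U, s z ^ 2 = f z := by
  obtain ⟨L, hL⟩ := exists_hasDerivAt_log hUc hU hf hne
  refine ⟨fun z => Complex.exp (L z / 2), fun z hz =>
    ((hL z hz).2.div_const 2).cexp.differentiableAt.differentiableWithinAt, fun z hz => ?_⟩
  rw [← Complex.exp_nat_mul, Nat.cast_ofNat, mul_div_cancel₀ _ two_ne_zero, (hL z hz).1]

theorem ball_subset_image_of_sphere_subset_image (hUc : IsSimplyConnected U) (hU : IsOpen U)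
    (hf : DifferentiableOn ℂ f U) (hinj : InjOn f U) {c : ℂ} {R : ℝ} (hR : sphere c R ⊆ f '' U) :
    ball c R ⊆ f '' U := by
  intro b hb
  by_contra hbU
  have hne : ∀ z ∈ U, f z - b ≠ 0 := fun z hz h => hbU ⟨z, hz, sub_eq_zero.1 h⟩
  obtain ⟨L, hL⟩ := exists_hasDerivAt_log hUc hU (hf.sub_const b) hne
  -- `L ∘ f⁻¹` is a primitive of `(w - b)⁻¹` on the circle, whereas the integral is `2πi`.
  have hzero : (∮ w in C(c, R), (w - b)⁻¹) = 0 := by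
    refine circleIntegral.integral_eq_zero_of_hasDerivWithinAt
      (f := L ∘ Function.invFunOn f U) (pos_of_mem_ball hb).le fun w hw => ?_
    obtain ⟨z, hz, rfl⟩ := hR hw
    have hLz := (hL z hz).2
    rw [deriv_sub_const, ← hinj.leftInvOn_invFunOn hz] at hLz
    refine ((hLz.comp (f z) (hasDerivAt_invFunOn hU hf hinj hz)).congr_deriv ?_).hasDerivWithinAt
    rw [hinj.leftInvOn_invFunOn hz]
    have := deriv_ne_zero_of_injOn hU hf hinj hz
    have := hne z hz
    field_simp
  rw [circleIntegral.integral_sub_inv_of_mem_ball hb] at hzero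
  exact Complex.two_pi_I_ne_zero hzero

theorem isSimplyConnected_ball {r : ℝ} (hr : 0 < r) : IsSimplyConnected (ball z r) :=
  have := contractibleSpace_ball (x := z) hr
  SimplyConnectedSpace.ofContractible _

theorem IsSchwarzMap.invFunOn (hf : IsSchwarzMap f) (hinj : InjOn f (ball 0 1))
    (hsurj : SurjOn f (ball 0 1) (ball 0 1)) :
    IsSchwarzMap (Function.invFunOn f (ball 0 1)) where
  differentiableOn w hw := by
    obtain ⟨z, hz, rfl⟩ := hsurj hw
    exact (hasDerivAt_invFunOn isOpen_ball hf.differentiableOn hinj hz).differentiableAt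
      |>.differentiableWithinAt
  mapsTo := hsurj.mapsTo_invFunOn
  map_zero := by
    simpa [hf.map_zero] using hinj.leftInvOn_invFunOn (mem_ball_self (one_pos (α := ℝ)))

theorem IsSchwarzMap.exists_notMem_image (hf : IsSchwarzMap f) (hinj : InjOn f (ball 0 1))
    (hlt : ‖deriv f 0‖ < 1) {η : ℝ} (hη : η < 1) :
    ∃ a ∈ ball (0 : ℂ) 1, η < ‖a‖ ∧ a ∉ f '' ball 0 1 := by
  by_contra! hcon
  have hsurj : SurjOn f (ball 0 1) (ball 0 1) := fun b hb => by
    obtain ⟨R, hR, hR_one⟩ := exists_between (max_lt hη (mem_ball_zero_iff.1 hb))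
    refine ball_subset_image_of_sphere_subset_image (isSimplyConnected_ball one_pos) isOpen_ball
      hf.differentiableOn hinj (fun w hw => hcon w (sphere_subset_ball hR_one hw) ?_)
      (mem_ball_zero_iff.2 ((le_max_right _ _).trans_lt hR))
    rw [mem_sphere_zero_iff_norm.1 hw]
    exact (le_max_left _ _).trans_lt hR
  have hzero : (0 : ℂ) ∈ ball 0 1 := mem_ball_self one_pos
  have hderiv := hasDerivAt_invFunOn isOpen_ball hf.differentiableOn hinj hzero
  rw [hf.map_zero] at hderiv
  have hle := (hf.invFunOn hinj hsurj).norm_deriv_zero_le_one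
  rw [hderiv.deriv, norm_inv, inv_le_one₀ (norm_pos_iff.2
    (deriv_ne_zero_of_injOn isOpen_ball hf.differentiableOn hinj hzero))] at hle
  exact hle.not_gt hlt

end Univalent

section Koebe

open ComplexConjugate

variable {a z w : ℂ}

/-- The automorphism `z ↦ (z - a) / (1 - a̅ z)` of the unit disc, which sends `a` to `0`. -/
def discMoebius (a z : ℂ) : ℂ := (z - a) / (1 - conj a * z)

theorem one_sub_mul_ne_zero (ha : a ∈ ball (0 : ℂ) 1) (hz : z ∈ ball (0 : ℂ) 1) :
    1 - a * z ≠ 0 := by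
  rw [mem_ball_zero_iff] at ha hz
  refine sub_ne_zero.2 fun h => ?_
  have hlt := mul_lt_one_of_nonneg_of_lt_one_left (norm_nonneg a) ha hz.le
  rw [← norm_mul, ← h, norm_one] at hlt
  exact lt_irrefl _ hlt

theorem conj_mem_ball_zero {r : ℝ} (ha : a ∈ ball (0 : ℂ) r) : conj a ∈ ball (0 : ℂ) r := by
  simpa using ha

theorem discMoebius_mem_ball (ha : a ∈ ball (0 : ℂ) 1) (hz : z ∈ ball (0 : ℂ) 1) :
    discMoebius a z ∈ ball (0 : ℂ) 1 := by
  have hne := one_sub_mul_ne_zero (conj_mem_ball_zero ha) hz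
  rw [mem_ball_zero_iff] at ha hz ⊢
  have hdiff : ‖1 - conj a * z‖ ^ 2 - ‖z - a‖ ^ 2 = (1 - ‖a‖ ^ 2) * (1 - ‖z‖ ^ 2) := by
    simp only [← Complex.normSq_eq_norm_sq, Complex.normSq_apply, Complex.sub_re, Complex.sub_im,
      Complex.mul_re, Complex.mul_im, Complex.conj_re, Complex.conj_im, Complex.one_re,
      Complex.one_im]
    ring
  rw [discMoebius, norm_div, div_lt_one (norm_pos_iff.2 hne), ← sq_lt_sq₀ (norm_nonneg _)
    (norm_nonneg _), ← sub_pos, hdiff]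
  have ha' : ‖a‖ ^ 2 < 1 := pow_lt_one₀ (norm_nonneg _) ha two_ne_zero
  have hz' : ‖z‖ ^ 2 < 1 := pow_lt_one₀ (norm_nonneg _) hz two_ne_zero
  exact mul_pos (sub_pos.2 ha') (sub_pos.2 hz')

theorem discMoebius_neg_discMoebius (ha : a ∈ ball (0 : ℂ) 1) (hz : z ∈ ball (0 : ℂ) 1) :
    discMoebius (-a) (discMoebius a z) = z := by
  have hz' := one_sub_mul_ne_zero (conj_mem_ball_zero ha) hz
  have ha' := one_sub_mul_ne_zero (conj_mem_ball_zero ha) ha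
  have hnum : (z - a) / (1 - conj a * z) - -a = z * (1 - conj a * a) / (1 - conj a * z) := by
    rw [eq_div_iff hz', sub_mul, div_mul_cancel₀ _ hz']
    ring
  have hden : 1 - -conj a * ((z - a) / (1 - conj a * z)) =
      (1 - conj a * a) / (1 - conj a * z) := by
    rw [eq_div_iff hz', sub_mul, mul_assoc, div_mul_cancel₀ _ hz']
    ring
  rw [discMoebius, discMoebius, map_neg, hnum, hden, div_div_div_cancel_right₀ hz',
    mul_div_cancel_right₀ _ ha']

theorem differentiableOn_discMoebius (ha : a ∈ ball (0 : ℂ) 1) :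
    DifferentiableOn ℂ (discMoebius a) (ball 0 1) :=
  (differentiableOn_id.sub_const a).div ((differentiableOn_id.const_mul _).const_sub 1)
    fun _ hz => one_sub_mul_ne_zero (conj_mem_ball_zero ha) hz

theorem discMoebius_sq_discMoebius_neg (ha : a ∈ ball (0 : ℂ) 1) (hz : z ∈ ball (0 : ℂ) 1) :
    discMoebius (a ^ 2) (discMoebius (-a) z ^ 2) =
      z * discMoebius (-(2 * a / (1 + ‖a‖ ^ 2))) z := by
  have hza : 1 + z * conj a ≠ 0 := by
    simpa [mul_comm] using one_sub_mul_ne_zero (a := conj (-a)) (by simpa using ha) hz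
  have ha_sub : 1 - a * conj a ≠ 0 := one_sub_mul_ne_zero ha (conj_mem_ball_zero ha)
  have ha_add : 1 + a * conj a ≠ 0 := by
    simpa [mul_comm] using one_sub_mul_ne_zero (a := conj (-a)) (by simpa using ha) ha
  set q := (1 - a * conj a) * (1 + a * conj a) / (1 + z * conj a) ^ 2 with hq
  have hnum : ((z + a) / (1 + z * conj a)) ^ 2 - a ^ 2 =
      z * (z + 2 * a / (1 + a * conj a)) * q := by
    rw [hq]
    field_simp
    ring
  have hden : 1 - ((z + a) / (1 + z * conj a)) ^ 2 * conj a ^ 2 =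
      (1 + z * (2 * conj a / (1 + a * conj a))) * q := by
    rw [hq]
    field_simp
    ring
  have hq_ne : q ≠ 0 := by
    positivity
  simp only [discMoebius, map_neg, map_pow, map_div₀, map_add, map_mul, map_one, map_ofNat,
    neg_mul, sub_neg_eq_add, ← Complex.mul_conj', Complex.conj_conj]
  rw [mul_comm (conj a) z, mul_comm (conj a) a, mul_comm (conj a ^ 2), mul_comm _ z, hnum, hden,
    mul_div_mul_right _ _ hq_ne, mul_div_assoc]

theorem IsSchwarzMap.exists_eq_mul_discMoebius {ψ : ℂ → ℂ} (hψ : IsSchwarzMap ψ)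
    (ha : a ∈ ball (0 : ℂ) 1) (hψa : a ∉ ψ '' ball 0 1) :
    ∃ c ∈ ball (0 : ℂ) 1, ‖c‖ ^ 2 = ‖a‖ ∧ ∃ χ, IsSchwarzMap χ ∧ ∀ z ∈ ball (0 : ℂ) 1,
      ψ z = χ z * discMoebius (-(2 * c / (1 + ‖c‖ ^ 2))) (χ z) := by
  obtain ⟨s, hs, hs_sq⟩ := exists_differentiableOn_sq_eq (isSimplyConnected_ball one_pos)
    isOpen_ball ((differentiableOn_discMoebius ha).comp hψ.differentiableOn hψ.mapsTo)
    fun z hz => div_ne_zero (sub_ne_zero.2 fun h => hψa ⟨z, hz, h⟩)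
      (one_sub_mul_ne_zero (conj_mem_ball_zero ha) (hψ.mapsTo hz))
  have hs_ball : MapsTo s (ball 0 1) (ball 0 1) := fun z hz => by
    have hlt := mem_ball_zero_iff.1 (discMoebius_mem_ball ha (hψ.mapsTo hz))
    rw [← Function.comp_apply (f := discMoebius a), ← hs_sq z hz, norm_pow,
      sq_lt_one_iff₀ (norm_nonneg _)] at hlt
    exact mem_ball_zero_iff.2 hlt
  have hzero : (0 : ℂ) ∈ ball (0 : ℂ) 1 := mem_ball_self one_pos
  have hc : s 0 ∈ ball (0 : ℂ) 1 := hs_ball hzero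
  have hc_sq : s 0 ^ 2 = -a := by simp [hs_sq 0 hzero, hψ.map_zero, discMoebius]
  refine ⟨s 0, hc, by rw [← norm_pow, hc_sq, norm_neg], fun z => discMoebius (s 0) (s z),
    ⟨(differentiableOn_discMoebius hc).comp hs hs_ball,
      fun z hz => discMoebius_mem_ball hc (hs_ball hz), by simp [discMoebius]⟩, fun z hz => ?_⟩
  rw [← discMoebius_sq_discMoebius_neg hc (discMoebius_mem_ball hc (hs_ball hz)),
    discMoebius_neg_discMoebius hc (hs_ball hz), hs_sq z hz, hc_sq, Function.comp_apply,
    discMoebius_neg_discMoebius ha (hψ.mapsTo hz)]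

/-- The Blaschke product of degree two through which a self-map of the unit disc that fixes the
origin and omits a value factors, rotated so that its derivative at the origin is `β`. -/
def koebeBlaschke (β : ℝ) (v w : ℂ) : ℂ := w * discMoebius (-β) (v * w)

theorem mul_discMoebius_neg_mul {β : ℝ} {u : ℂ} (hu : ‖u‖ = 1) :
    w * discMoebius (-(β * u)) w = koebeBlaschke β (conj u ^ 2) (u * w) := by
  have hu' : conj u * u = 1 := by rw [mul_comm, Complex.mul_conj', hu]; norm_num
  have hnum : u * (conj u ^ 2 * (u * w) - -β) = w - -(β * u) := by
    linear_combination (conj u * u + 1) * w * hu'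
  have hden : conj u ^ 2 * (u * w) = conj u * w := by
    linear_combination conj u * w * hu'
  simp only [koebeBlaschke, discMoebius, map_neg, map_mul, Complex.conj_ofReal]
  rw [mul_comm u w, mul_assoc, ← mul_div_assoc u, mul_comm w u, hnum, hden, neg_mul, neg_mul,
    mul_assoc]

theorem IsSchwarzMap.exists_eq_koebeBlaschke {ψ : ℂ → ℂ} (hψ : IsSchwarzMap ψ)
    (ha : a ∈ ball (0 : ℂ) 1) (hψa : a ∉ ψ '' ball 0 1) :
    ∃ (β : ℝ) (v : ℂ) (χ : ℂ → ℂ), ‖a‖ ≤ β ∧ β < 1 ∧ ‖v‖ = 1 ∧ IsSchwarzMap χ ∧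
      ∀ z ∈ ball (0 : ℂ) 1, ψ z = koebeBlaschke β v (χ z) := by
  obtain ⟨c, hc, hca, χ, hχ, hψχ⟩ := hψ.exists_eq_mul_discMoebius ha hψa
  have ha_pos : 0 < ‖a‖ := norm_pos_iff.2 fun h =>
    hψa ⟨0, mem_ball_self one_pos, hψ.map_zero.trans h.symm⟩
  have hc_pos : 0 < ‖c‖ := (norm_nonneg c).lt_of_ne fun h => by simp [← hca, ← h] at ha_pos
  have hc_one : ‖c‖ < 1 := mem_ball_zero_iff.1 hc
  have hu : ‖c / ‖c‖‖ = 1 := by simp [div_self hc_pos.ne']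
  refine ⟨2 * ‖c‖ / (1 + ‖c‖ ^ 2), conj (c / ‖c‖) ^ 2, fun z => c / ‖c‖ * χ z, ?_, ?_,
    by rw [norm_pow, RCLike.norm_conj, hu, one_pow], .of_norm_apply_le
      (hχ.differentiableOn.const_mul _) fun z hz => ?_, fun z hz => ?_⟩
  · rw [← hca, le_div_iff₀ (by positivity), mul_comm 2]
    exact mul_le_mul (pow_le_of_le_one hc_pos.le hc_one.le two_ne_zero) (by nlinarith)
      (by positivity) hc_pos.le
  · rw [div_lt_one (by positivity)]
    nlinarith
  · rw [norm_mul, hu, one_mul]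
    exact hχ.norm_apply_le hz
  · rw [← mul_discMoebius_neg_mul hu, hψχ z hz]
    congr 3
    have : (‖c‖ : ℂ) ≠ 0 := Complex.ofReal_ne_zero.2 hc_pos.ne'
    push_cast
    field_simp

end Koebe

section KoebeBlaschke

open Filter Topology ComplexConjugate

variable {β ρ : ℝ} {v w : ℂ}

theorem mul_mem_ball_zero_one {a z : ℂ} (ha : ‖a‖ ≤ 1) (hz : z ∈ ball (0 : ℂ) 1) :
    a * z ∈ ball (0 : ℂ) 1 := by
  rw [mem_ball_zero_iff] at hz ⊢
  exact (norm_mul_le a z).trans_lt (mul_lt_one_of_nonneg_of_lt_one_right ha (norm_nonneg z) hz)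

theorem neg_ofReal_mem_ball (hβ₀ : 0 ≤ β) (hβ₁ : β < 1) : -(β : ℂ) ∈ ball (0 : ℂ) 1 := by
  rwa [mem_ball_zero_iff, norm_neg, Complex.norm_of_nonneg hβ₀]

theorem isSchwarzMap_koebeBlaschke (hβ₀ : 0 ≤ β) (hβ₁ : β < 1) (hv : ‖v‖ = 1) :
    IsSchwarzMap (koebeBlaschke β v) := by
  have hβ := neg_ofReal_mem_ball hβ₀ hβ₁
  refine .of_norm_apply_le (differentiableOn_id.mul ((differentiableOn_discMoebius hβ).comp
    (differentiableOn_id.const_mul v) fun w hw => mul_mem_ball_zero_one hv.le hw)) fun w hw => ?_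
  rw [koebeBlaschke, norm_mul]
  exact mul_le_of_le_one_right (norm_nonneg w)
    (mem_ball_zero_iff.1 (discMoebius_mem_ball hβ (mul_mem_ball_zero_one hv.le hw))).le

theorem re_discMoebius_neg_pos (hβ₁ : β < 1) {z : ℂ} (hz : ‖z‖ < β) :
    0 < (discMoebius (-β) z).re := by
  have hβ₀ : 0 < β := (norm_nonneg z).trans_lt hz
  have hne : 1 + β * z ≠ 0 := by
    simpa using one_sub_mul_ne_zero (neg_ofReal_mem_ball hβ₀.le hβ₁)
      (mem_ball_zero_iff.2 (hz.trans hβ₁))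
  have hnum : 0 < ((z + β) * conj (1 + β * z)).re := by
    have hre : ((z + β) * conj (1 + β * z)).re = β + (1 + β ^ 2) * z.re + β * ‖z‖ ^ 2 := by
      rw [← Complex.normSq_eq_norm_sq, Complex.normSq_apply]
      simp only [map_add, map_one, map_mul, Complex.conj_ofReal, Complex.mul_re, Complex.mul_im,
        Complex.add_re, Complex.add_im, Complex.one_re, Complex.one_im, Complex.ofReal_re,
        Complex.ofReal_im, Complex.conj_re, Complex.conj_im]
      ring
    have hz_re : -‖z‖ ≤ z.re := (abs_le.1 (Complex.abs_re_le_norm z)).1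
    calc 0 < (β - ‖z‖) * (1 - β * ‖z‖) :=
          mul_pos (sub_pos.2 hz) (by nlinarith [norm_nonneg z])
      _ = β + (1 + β ^ 2) * -‖z‖ + β * ‖z‖ ^ 2 := by ring
      _ ≤ _ := by rw [hre]; gcongr
  have hdiv : discMoebius (-β) z =
      (z + β) * conj (1 + β * z) * ((Complex.normSq (1 + β * z))⁻¹ : ℝ) := by
    rw [discMoebius, map_neg, Complex.conj_ofReal, sub_neg_eq_add, neg_mul, sub_neg_eq_add,
      div_eq_mul_inv, Complex.inv_def, mul_assoc]
  rw [hdiv, Complex.re_mul_ofReal]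
  exact mul_pos hnum (inv_pos.2 (Complex.normSq_pos.2 hne))

theorem exists_isCaratheodory_koebeBlaschke (hρ : 0 < ρ) (hρβ : ρ < β) (hβ₁ : β < 1)
    (hv : ‖v‖ = 1) :
    ∃ r : ℂ → ℂ, IsCaratheodory r ∧ (r 0).re = -Real.log β ∧
      ∀ w ∈ ball (0 : ℂ) 1, koebeBlaschke β v (ρ * w) = ρ * schwarzMap r w := by
  have hβ₀ : 0 < β := hρ.trans hρβ
  have hβ := neg_ofReal_mem_ball hβ₀.le hβ₁
  have hnorm : ∀ w ∈ ball (0 : ℂ) 1, ‖v * (ρ * w)‖ < β := fun w hw => by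
    rw [norm_mul, norm_mul, hv, one_mul, Complex.norm_of_nonneg hρ.le]
    exact (mul_le_of_le_one_right hρ.le (mem_ball_zero_iff.1 hw).le).trans_lt hρβ
  have hball : MapsTo (fun w : ℂ => v * (ρ * w)) (ball 0 1) (ball 0 1) := fun w hw =>
    mem_ball_zero_iff.2 ((hnorm w hw).trans hβ₁)
  have hpos : ∀ w ∈ ball (0 : ℂ) 1, 0 < (discMoebius (-β) (v * (ρ * w))).re := fun w hw =>
    re_discMoebius_neg_pos hβ₁ (hnorm w hw)
  have hzero : -Complex.log (discMoebius (-β) (v * (ρ * 0))) = ((-Real.log β : ℝ) : ℂ) := by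
    simp [discMoebius, Complex.ofReal_log hβ₀.le]
  refine ⟨fun w => -Complex.log (discMoebius (-β) (v * (ρ * w))), ⟨?_, fun w hw => ?_, ?_⟩, ?_,
    fun w hw => ?_⟩
  · exact ((((differentiableOn_discMoebius hβ).comp (by fun_prop) hball)).clog
      fun w hw => Or.inl (hpos w hw)).neg
  · rw [Complex.neg_re, Complex.log_re, neg_nonneg]
    exact Real.log_nonpos (norm_nonneg _)
      (mem_ball_zero_iff.1 (discMoebius_mem_ball hβ (hball hw))).le
  · simp only [hzero, Complex.ofReal_im]
  · simp only [hzero, Complex.ofReal_re]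
  · have hne : discMoebius (-β) (v * (ρ * w)) ≠ 0 := fun h => by
      simpa [h] using hpos w hw
    rw [schwarzMap, neg_neg, Complex.exp_log hne, koebeBlaschke, mul_assoc]

end KoebeBlaschke

section Factorization

open Filter Topology PowerSeries

/-- A Schwarz map `φ` factors through a Schwarz map `Q` that is a stage of a discrete Loewner
chain: dilated by `ρ`, the factor `Q` becomes the map `schwarzMap q`, and along the steps leading
to `q` the Milin functional has exceeded zero by at most `ε` times the elapsed time `(q 0).re`. -/
structure IsMilinFactorization (n : ℕ) (ε ρ : ℝ) (φ q Q ψ : ℂ → ℂ) : Prop where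
  caratheodory : IsCaratheodory q
  outer : IsSchwarzMap Q
  inner : IsSchwarzMap ψ
  milin_le : ∀ t, 0 ≤ t → milinFunctional n (maclaurinSeries q) t ≤ ε * (q 0).re
  dilation : ∀ w ∈ ball (0 : ℂ) 1, Q (ρ * w) = ρ * schwarzMap q w
  eq_comp : ∀ z ∈ ball (0 : ℂ) 1, φ z = Q (ψ z)

theorem milinFunctional_zero_nonpos (n : ℕ) {t : ℝ} (ht : 0 ≤ t) : milinFunctional n 0 t ≤ 0 := by
  obtain ⟨h₀, h₁⟩ := exp_neg_mem_Icc ht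
  refine Finset.sum_nonpos fun i _ => mul_nonpos_of_nonneg_of_nonpos
    (deBrangesWeight_eval_nonneg n (i + 1) h₀ h₁) ?_
  rw [map_zero, norm_zero, zero_pow two_ne_zero, mul_zero, zero_sub, neg_nonpos]
  positivity

theorem IsCaratheodory.deriv_schwarzMap_zero {p : ℂ → ℂ} (hp : IsCaratheodory p) :
    deriv (schwarzMap p) 0 = Real.exp (-(p 0).re) := by
  have h := (hasDerivAt_id (0 : ℂ)).fun_mul
    hp.analyticAt_zero.differentiableAt.hasDerivAt.fun_neg.cexp
  rw [show schwarzMap p = fun z => id z * Complex.exp (-p z) from rfl, h.deriv, hp.apply_zero]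
  simp

theorem exists_milinFunctional_add_comp_schwarzMap_le_add_mul (n : ℕ) (T : ℝ) {ε : ℝ}
    (hε : 0 < ε) :
    ∃ δ > 0, ∀ p q, IsCaratheodory p → IsCaratheodory q → (p 0).re ≤ T → (q 0).re < δ →
      ∀ t, 0 ≤ t → milinFunctional n (maclaurinSeries fun z => q z + p (schwarzMap q z)) t ≤
        milinFunctional n (maclaurinSeries p) (t + (q 0).re) + ε * (q 0).re := by
  obtain ⟨C, hC⟩ := exists_milinFunctional_add_comp_schwarzMap_le n T
  refine ⟨min (1 / 16) (ε / (|C| + 1)), by positivity, fun p q hp hq hpT hqδ t ht => ?_⟩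
  refine (hC p q hp hq hpT (hqδ.trans_le (min_le_left _ _)) t ht).trans
    (add_le_add_right ?_ _)
  have hq_mul := (le_div_iff₀ (by positivity)).1 (hqδ.le.trans (min_le_right _ _))
  calc C * (q 0).re ^ 2 ≤ (|C| + 1) * (q 0).re ^ 2 :=
        mul_le_mul_of_nonneg_right ((le_abs_self C).trans (lt_add_one _).le) (sq_nonneg _)
    _ = (q 0).re * (|C| + 1) * (q 0).re := by ring
    _ ≤ ε * (q 0).re := mul_le_mul_of_nonneg_right hq_mul hq.re_zero_nonneg

namespace IsMilinFactorization

variable {n : ℕ} {ε ρ T : ℝ} {φ q Q ψ : ℂ → ℂ}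

theorem id_comp (n : ℕ) (ε ρ : ℝ) (hφ : IsSchwarzMap φ) :
    IsMilinFactorization n ε ρ φ (fun _ => 0) id φ where
  caratheodory := ⟨differentiableOn_const _, fun _ _ => le_rfl, rfl⟩
  outer := ⟨differentiableOn_id, mapsTo_id _, rfl⟩
  inner := hφ
  milin_le t ht := by
    have hzero : maclaurinSeries (fun _ => (0 : ℂ)) = 0 := by
      ext k
      simp [coeff_maclaurinSeries]
    simpa [hzero] using milinFunctional_zero_nonpos n ht
  dilation w _ := by simp [schwarzMap]
  eq_comp _ _ := rfl

theorem deriv_outer_zero (h : IsMilinFactorization n ε ρ φ q Q ψ) (hρ : 0 < ρ) :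
    deriv Q 0 = Real.exp (-(q 0).re) := by
  have heq : (fun w : ℂ => Q (ρ * w)) =ᶠ[𝓝 0] fun w => ρ * schwarzMap q w :=
    eventually_of_mem (ball_mem_nhds 0 one_pos) h.dilation
  have hderiv := heq.deriv_eq
  rw [deriv_comp_mul_left, mul_zero, deriv_const_mul_field, smul_eq_mul,
    h.caratheodory.deriv_schwarzMap_zero] at hderiv
  exact mul_left_cancel₀ (Complex.ofReal_ne_zero.2 hρ.ne') hderiv

theorem deriv_inner_zero (h : IsMilinFactorization n ε ρ φ q Q ψ) (hρ : 0 < ρ)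
    (hT : deriv φ 0 = Real.exp (-T)) : deriv ψ 0 = Real.exp ((q 0).re - T) := by
  have hψ := h.inner.differentiableOn.differentiableAt (ball_mem_nhds 0 one_pos)
  have hQ := h.outer.differentiableOn.differentiableAt (ball_mem_nhds 0 one_pos)
  have heq : φ =ᶠ[𝓝 0] Q ∘ ψ := eventually_of_mem (ball_mem_nhds 0 one_pos) h.eq_comp
  have hderiv := heq.deriv_eq
  rw [deriv_comp 0 (by rwa [h.inner.map_zero]) hψ, h.inner.map_zero, h.deriv_outer_zero hρ,
    hT] at hderiv
  refine mul_left_cancel₀ (Complex.ofReal_ne_zero.2 (Real.exp_pos (-(q 0).re)).ne') ?_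
  rw [← hderiv, ← Complex.ofReal_mul, ← Real.exp_add]
  congr 2
  ring

theorem re_zero_le (h : IsMilinFactorization n ε ρ φ q Q ψ) (hρ : 0 < ρ)
    (hT : deriv φ 0 = Real.exp (-T)) : (q 0).re ≤ T := by
  have hle := h.inner.norm_deriv_zero_le_one
  rwa [h.deriv_inner_zero hρ hT, Complex.norm_of_nonneg (Real.exp_pos _).le,
    Real.exp_le_one_iff, sub_nonpos] at hle

theorem of_tendstoLocallyUniformlyOn {F : Fin 3 → ℕ → ℂ → ℂ} {G : Fin 3 → ℂ → ℂ}
    (hρ : ‖(ρ : ℂ)‖ ≤ 1)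
    (hF : ∀ m, IsMilinFactorization n ε ρ φ (F 0 m) (F 1 m) (F 2 m))
    (hG : ∀ i, TendstoLocallyUniformlyOn (F i) (G i) atTop (ball 0 1)) :
    IsMilinFactorization n ε ρ φ (G 0) (G 1) (G 2) := by
  have hzero : (0 : ℂ) ∈ ball (0 : ℂ) 1 := mem_ball_self one_pos
  have hQ := IsSchwarzMap.of_tendstoLocallyUniformlyOn (fun m => (hF m).outer) (hG 1)
  have hψ := IsSchwarzMap.of_tendstoLocallyUniformlyOn (fun m => (hF m).inner) (hG 2)
  have hcoeff := tendsto_coeff_maclaurinSeries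
    (fun m => (hF m).caratheodory.differentiableOn) (hG 0)
  refine ⟨.of_tendstoLocallyUniformlyOn (fun m => (hF m).caratheodory) (hG 0), hQ, hψ,
    fun t ht => ?_, fun w hw => ?_, fun z hz => ?_⟩
  · have hlim : Tendsto (fun m => milinFunctional n (maclaurinSeries (F 0 m)) t) atTop
        (𝓝 (milinFunctional n (maclaurinSeries (G 0)) t)) :=
      tendsto_finsetSum _ fun i _ =>
        ((((hcoeff (i + 1)).norm.pow 2).const_mul _).sub_const _).const_mul _
    exact le_of_tendsto_of_tendsto' hlim
      (((Complex.continuous_re.tendsto _).comp ((hG 0).tendsto_at hzero)).const_mul ε)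
      fun m => (hF m).milin_le t ht
  · refine tendsto_nhds_unique ((hG 1).tendsto_at (mul_mem_ball_zero_one hρ hw)) ?_
    simp only [fun m => (hF m).dilation w hw]
    exact (((hG 0).tendsto_at hw).neg.cexp.const_mul w).const_mul _
  · have hlim : Tendsto (fun m => F 1 m (F 2 m z)) atTop (𝓝 (G 1 (G 2 z))) :=
      (hG 1).tendsto_comp (hQ.differentiableOn.continuousOn _ (hψ.mapsTo hz)) (hψ.mapsTo hz)
        (tendsto_nhdsWithin_iff.2 ⟨(hG 2).tendsto_at hz,
          Eventually.of_forall fun m => (hF m).inner.mapsTo hz⟩)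
    simp only [← fun m => (hF m).eq_comp z hz] at hlim
    exact tendsto_nhds_unique tendsto_const_nhds hlim

theorem isClosed_setOf_re_zero (hρ₀ : 0 < ρ) (hρ₁ : ρ ≤ 1) (hT : deriv φ 0 = Real.exp (-T)) :
    IsClosed {x | ∃ q Q ψ, IsMilinFactorization n ε ρ φ q Q ψ ∧ (q 0).re = x} := by
  refine IsSeqClosed.isClosed fun x y hx hy => ?_
  choose q Q ψ h hqx using hx
  obtain ⟨σ, hσ, hlim⟩ := exists_subseq_tendstoLocallyUniformlyOn (F := ![q, Q, ψ])
    (C := ![2 * T, 1, 1])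
    (Fin.forall_fin_succ.2 ⟨fun m => (h m).caratheodory.differentiableOn, Fin.forall_fin_two.2
      ⟨fun m => (h m).outer.differentiableOn, fun m => (h m).inner.differentiableOn⟩⟩)
    (Fin.forall_fin_succ.2 ⟨fun m k => ((h m).caratheodory.norm_coeff_le k).trans
      (mul_le_mul_of_nonneg_left ((h m).re_zero_le hρ₀ hT) zero_le_two), Fin.forall_fin_two.2
      ⟨fun m => (h m).outer.norm_coeff_le_one, fun m => (h m).inner.norm_coeff_le_one⟩⟩)
  choose G hG using hlim
  refine ⟨G 0, G 1, G 2, of_tendstoLocallyUniformlyOn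
    (by rwa [Complex.norm_of_nonneg hρ₀.le]) (fun m => h (σ m)) hG, ?_⟩
  refine tendsto_nhds_unique ((Complex.continuous_re.tendsto _).comp
    ((hG 0).tendsto_at (mem_ball_self one_pos))) ?_
  exact (hy.comp hσ.tendsto_atTop).congr fun m => (hqx (σ m)).symm

theorem comp_koebeBlaschke (h : IsMilinFactorization n ε ρ φ q Q ψ) {β : ℝ} (hβ₀ : 0 ≤ β)
    (hβ₁ : β < 1) {v : ℂ} (hv : ‖v‖ = 1) {r χ : ℂ → ℂ} (hr : IsCaratheodory r)
    (hrβ : ∀ w ∈ ball (0 : ℂ) 1, koebeBlaschke β v (ρ * w) = ρ * schwarzMap r w)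
    (hχ : IsSchwarzMap χ) (hψχ : ∀ z ∈ ball (0 : ℂ) 1, ψ z = koebeBlaschke β v (χ z))
    (hstep : ∀ t, 0 ≤ t → milinFunctional n (maclaurinSeries fun z => r z + q (schwarzMap r z)) t ≤
      milinFunctional n (maclaurinSeries q) (t + (r 0).re) + ε * (r 0).re) :
    IsMilinFactorization n ε ρ φ (fun z => r z + q (schwarzMap r z)) (Q ∘ koebeBlaschke β v) χ where
  caratheodory := h.caratheodory.add_comp_schwarzMap hr
  outer := h.outer.comp (isSchwarzMap_koebeBlaschke hβ₀ hβ₁ hv)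
  inner := hχ
  milin_le t ht := by
    have hle := h.milin_le (t + (r 0).re) (add_nonneg ht hr.re_zero_nonneg)
    rw [schwarzMap_zero, Complex.add_re]
    linarith [hstep t ht]
  dilation w hw := by
    rw [Function.comp_apply, hrβ w hw, h.dilation _ (hr.mapsTo_schwarzMap hw),
      schwarzMap_schwarzMap]
  eq_comp z hz := by rw [h.eq_comp z hz, hψχ z hz, Function.comp_apply]

theorem exists_re_zero_gt (h : IsMilinFactorization n ε ρ φ q Q ψ) (hε : 0 < ε) (hρ₀ : 0 < ρ)
    (hρ₁ : ρ < 1) (hφ : InjOn φ (ball 0 1)) (hT : deriv φ 0 = Real.exp (-T)) (hlt : (q 0).re < T) :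
    ∃ q' Q' ψ', IsMilinFactorization n ε ρ φ q' Q' ψ' ∧ (q 0).re < (q' 0).re := by
  obtain ⟨δ, hδ_pos, hδ⟩ := exists_milinFunctional_add_comp_schwarzMap_le_add_mul n T hε
  have hψ_inj : InjOn ψ (ball 0 1) := fun z hz w hw hzw =>
    hφ hz hw (by rw [h.eq_comp z hz, h.eq_comp w hw, hzw])
  obtain ⟨a, ha, hηa, hψa⟩ := h.inner.exists_notMem_image hψ_inj
    (by rwa [h.deriv_inner_zero hρ₀ hT, Complex.norm_of_nonneg (Real.exp_pos _).le,
      Real.exp_lt_one_iff, sub_neg])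
    (max_lt hρ₁ (Real.exp_lt_one_iff.2 (neg_lt_zero.2 hδ_pos)))
  obtain ⟨β, v, χ, haβ, hβ₁, hv, hχ, hψχ⟩ := h.inner.exists_eq_koebeBlaschke ha hψa
  have hρβ : ρ < β := (le_max_left _ _).trans_lt (hηa.trans_le haβ)
  have hβ₀ : 0 < β := hρ₀.trans hρβ
  obtain ⟨r, hr, hr₀, hrβ⟩ := exists_isCaratheodory_koebeBlaschke hρ₀ hρβ hβ₁ hv
  have hr_pos : 0 < (r 0).re := hr₀ ▸ neg_pos.2 (Real.log_neg hβ₀ hβ₁)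
  have hrδ : (r 0).re < δ := by
    rw [hr₀, neg_lt, Real.lt_log_iff_exp_lt hβ₀]
    exact (le_max_right _ _).trans_lt (hηa.trans_le haβ)
  refine ⟨_, _, χ, h.comp_koebeBlaschke hβ₀.le hβ₁ hv hr hrβ hχ hψχ fun t ht => ?_, ?_⟩
  · exact hδ q r h.caratheodory hr hlt.le hrδ t ht
  · simpa [schwarzMap_zero] using hr_pos

end IsMilinFactorization

/-- The discrete substitute for Loewner's equation: the times reached by factorizations form a
closed set that cannot stop before `T`. -/
theorem IsSchwarzMap.exists_schwarzMap_milinFunctional_le {φ : ℂ → ℂ} (hφ : IsSchwarzMap φ)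
    (hinj : InjOn φ (ball 0 1)) {T : ℝ} (hT : deriv φ 0 = Real.exp (-T)) (n : ℕ) {ε ρ : ℝ}
    (hε : 0 < ε) (hρ₀ : 0 < ρ) (hρ₁ : ρ < 1) :
    ∃ q, IsCaratheodory q ∧ (q 0).re = T ∧ milinFunctional n (maclaurinSeries q) 0 ≤ ε * T ∧
      ∀ w ∈ ball (0 : ℂ) 1, φ (ρ * w) = ρ * schwarzMap q w := by
  have hbdd : T ∈ upperBounds {x | ∃ q Q ψ, IsMilinFactorization n ε ρ φ q Q ψ ∧ (q 0).re = x} := by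
    rintro _ ⟨q, Q, ψ, h, rfl⟩
    exact h.re_zero_le hρ₀ hT
  obtain ⟨q, Q, ψ, h, hq⟩ := (IsMilinFactorization.isClosed_setOf_re_zero (n := n) (ε := ε) hρ₀
    hρ₁.le hT).csSup_mem ⟨_, _, _, _, .id_comp n ε ρ hφ, rfl⟩ ⟨T, hbdd⟩
  have hqT : (q 0).re = T := by
    refine (hbdd ⟨q, Q, ψ, h, rfl⟩).eq_of_not_lt fun hlt => ?_
    obtain ⟨q', Q', ψ', h', hlt'⟩ := h.exists_re_zero_gt hε hρ₀ hρ₁ hinj hT hlt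
    exact hlt'.not_ge (hq ▸ le_csSup ⟨T, hbdd⟩ ⟨q', Q', ψ', h', rfl⟩)
  have hψ_deriv : deriv ψ 0 = 1 := by
    rw [h.deriv_inner_zero hρ₀ hT, hqT, sub_self, Real.exp_zero, Complex.ofReal_one]
  have hψ_id : EqOn ψ id (ball 0 1) := by
    refine (Complex.affine_of_mapsTo_ball_of_norm_dslope_eq_div h.inner.differentiableOn
      h.inner.mapsTo_closedBall (mem_ball_self one_pos) ?_).trans fun z _ => ?_
    · rw [dslope_same, hψ_deriv, norm_one, div_one]
    · simp [hψ_deriv, h.inner.map_zero]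
  refine ⟨q, h.caratheodory, hqT, hqT ▸ h.milin_le 0 le_rfl, fun w hw => ?_⟩
  have hρw := mul_mem_ball_zero_one ((Complex.norm_of_nonneg hρ₀.le).trans_le hρ₁.le) hw
  rw [h.eq_comp _ hρw, hψ_id hρw, id, h.dilation w hw]

end Factorization

section DeBrangesTheorem

open Filter Topology PowerSeries

theorem norm_coeff_sq_le (p : ℂ⟦X⟧) (n : ℕ) :
    ‖coeff n (p ^ 2)‖ ≤ ∑ k ∈ Finset.range (n + 1), ‖coeff k p‖ ^ 2 := by
  rw [pow_two, coeff_mul]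
  calc ‖∑ i ∈ Finset.HasAntidiagonal.antidiagonal n, coeff i.1 p * coeff i.2 p‖
      ≤ ∑ i ∈ Finset.HasAntidiagonal.antidiagonal n,
          (‖coeff i.1 p‖ ^ 2 + ‖coeff i.2 p‖ ^ 2) / 2 := by
        refine norm_sum_le_of_le _ fun i _ => ?_
        rw [norm_mul]
        linarith [two_mul_le_add_sq ‖coeff i.1 p‖ ‖coeff i.2 p‖]
    _ = ∑ k ∈ Finset.range (n + 1), ‖coeff k p‖ ^ 2 := by
        rw [← Finset.sum_div, Finset.sum_add_distrib,
          sum_antidiagonal_fst (fun k => ‖coeff k p‖ ^ 2),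
          sum_antidiagonal_snd (fun k => ‖coeff k p‖ ^ 2), add_self_div_two]

theorem derivative_maclaurinSeries_cexp {g : ℂ → ℂ} (hg : AnalyticAt ℂ g 0) :
    d⁄dX ℂ (maclaurinSeries fun z => Complex.exp (g z)) =
      d⁄dX ℂ (maclaurinSeries g) * maclaurinSeries fun z => Complex.exp (g z) := by
  rw [← maclaurinSeries_deriv, ← maclaurinSeries_deriv, ← maclaurinSeries_mul hg.deriv hg.cexp']
  refine maclaurinSeries_congr ?_
  filter_upwards [hg.eventually_analyticAt] with z hz
  rw [hz.differentiableAt.hasDerivAt.cexp.deriv, Pi.mul_apply, mul_comm]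

theorem milinFunctional_apply_zero (n : ℕ) (p : ℂ⟦X⟧) :
    milinFunctional n p 0 = ∑ k ∈ Finset.range n,
      ((n : ℝ) - k) * ((k + 1) * ‖coeff (k + 1) p‖ ^ 2 - 4 / (k + 1)) := by
  refine Finset.sum_congr rfl fun k hk => ?_
  rw [neg_zero, Real.exp_zero, deBrangesWeight_eval_one (by simp at hk; omega)]
  push_cast
  ring

theorem norm_coeff_succ_schwarzMap_le {q : ℂ → ℂ} (hq : AnalyticAt ℂ q 0) (n : ℕ) :
    ‖coeff (n + 1) (maclaurinSeries (schwarzMap q))‖ ≤ Real.exp (-(q 0).re) * (n + 1) *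
      Real.exp (milinFunctional n (maclaurinSeries q) 0 / 4 / (n + 1)) := by
  set g : ℂ → ℂ := (-(1 / 2) : ℂ) • q with hg_def
  have hg : AnalyticAt ℂ g 0 := hq.const_smul
  set β := maclaurinSeries fun z => Complex.exp (g z) with hβ
  have hseries : maclaurinSeries (schwarzMap q) = X * β ^ 2 := by
    rw [pow_two, hβ, ← maclaurinSeries_mul hg.cexp' hg.cexp', ← maclaurinSeries_id,
      ← maclaurinSeries_mul analyticAt_id (hg.cexp'.mul hg.cexp')]
    congr 1
    ext z
    simp only [schwarzMap, Pi.mul_apply, id, ← Complex.exp_add, hg_def, Pi.smul_apply, smul_eq_mul]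
    ring_nf
  have hzero : ‖coeff 0 β‖ ^ 2 = Real.exp (-(q 0).re) := by
    rw [coeff_zero_maclaurinSeries, Complex.norm_exp, ← Real.exp_nat_mul]
    simp [hg_def]
  have hmilin : ∑ k ∈ Finset.range n, ((n : ℝ) - k) *
      ((k + 1) * ‖coeff (k + 1) (maclaurinSeries g)‖ ^ 2 - 1 / (k + 1)) =
        milinFunctional n (maclaurinSeries q) 0 / 4 := by
    rw [milinFunctional_apply_zero, Finset.sum_div]
    refine Finset.sum_congr rfl fun k _ => ?_
    rw [maclaurinSeries_const_smul, coeff_smul, norm_smul]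
    norm_num
    ring
  rw [hseries, coeff_succ_X_mul, ← hmilin, ← hzero]
  exact (norm_coeff_sq_le β n).trans (lebedev_milin (derivative_maclaurinSeries_cexp hg) n)

theorem maclaurinSeries_comp_mul_left (c : ℂ) (f : ℂ → ℂ) :
    maclaurinSeries (fun z => f (c * z)) = rescale c (maclaurinSeries f) := by
  have hderiv (k : ℕ) : iteratedDeriv k (fun z => f (c * z)) =
      fun z => c ^ k * iteratedDeriv k f (c * z) := by
    induction k with
    | zero => simp
    | succ k ih =>
      ext z
      rw [iteratedDeriv_succ, ih, deriv_const_mul_field, deriv_comp_mul_left, iteratedDeriv_succ,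
        smul_eq_mul]
      ring
  ext k
  simp only [coeff_rescale, coeff_maclaurinSeries, hderiv, mul_zero, mul_left_comm]

theorem le_of_forall_pow_mul_le {x y : ℝ} (n : ℕ) (h : ∀ ρ ∈ Ioo (0 : ℝ) 1, ρ ^ n * x ≤ y) :
    x ≤ y := by
  have hlim : Tendsto (fun ρ : ℝ => ρ ^ n * x) (𝓝[<] 1) (𝓝 x) := by
    have hcont : Continuous fun ρ : ℝ => ρ ^ n * x := by fun_prop
    simpa using (hcont.tendsto 1).mono_left nhdsWithin_le_nhds
  exact le_of_tendsto hlim (eventually_of_mem (Ioo_mem_nhdsLT one_pos) h)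

theorem IsSchwarzMap.norm_coeff_succ_le_of_injOn {φ : ℂ → ℂ} (hφ : IsSchwarzMap φ)
    (hinj : InjOn φ (ball 0 1)) {T : ℝ} (hT : deriv φ 0 = Real.exp (-T)) (n : ℕ) :
    ‖coeff (n + 1) (maclaurinSeries φ)‖ ≤ Real.exp (-T) * (n + 1) := by
  refine le_of_forall_pow_mul_le n fun ρ hρ => ?_
  have hbound : ∀ ε > 0, ρ ^ n * ‖coeff (n + 1) (maclaurinSeries φ)‖ ≤
      Real.exp (-T) * (n + 1) * Real.exp (ε * T / 4 / (n + 1)) := fun ε hε => by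
    obtain ⟨q, hq, rfl, hmilin, hφq⟩ :=
      hφ.exists_schwarzMap_milinFunctional_le hinj hT n hε hρ.1 hρ.2
    have hcoeff : ρ ^ n * ‖coeff (n + 1) (maclaurinSeries φ)‖ =
        ‖coeff (n + 1) (maclaurinSeries (schwarzMap q))‖ := by
      have hseries := maclaurinSeries_congr (eventually_of_mem (ball_mem_nhds 0 one_pos) hφq)
      rw [maclaurinSeries_comp_mul_left] at hseries
      have hnorm := congrArg (fun p => ‖coeff (n + 1) p‖)
        (hseries.trans (maclaurinSeries_const_smul (ρ : ℂ) (schwarzMap q)))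
      simp only [coeff_rescale, coeff_smul, norm_smul, norm_mul, norm_pow,
        Complex.norm_of_nonneg hρ.1.le] at hnorm
      rw [pow_succ', mul_assoc] at hnorm
      exact mul_left_cancel₀ hρ.1.ne' hnorm
    rw [hcoeff]
    refine (norm_coeff_succ_schwarzMap_le hq.analyticAt_zero n).trans ?_
    gcongr
  have hlim : Tendsto (fun ε : ℝ => Real.exp (-T) * (n + 1) * Real.exp (ε * T / 4 / (n + 1)))
      (𝓝[>] 0) (𝓝 (Real.exp (-T) * (n + 1))) := by
    have hcont : Continuous fun ε : ℝ =>
        Real.exp (-T) * (n + 1) * Real.exp (ε * T / 4 / (n + 1)) := by fun_prop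
    simpa using (hcont.tendsto 0).mono_left nhdsWithin_le_nhds
  exact ge_of_tendsto hlim (eventually_of_mem self_mem_nhdsWithin hbound)

theorem coeff_succ_maclaurinSeries_dilation (f : ℂ → ℂ) (a c ρ : ℂ) (n : ℕ) :
    coeff (n + 1) (maclaurinSeries fun z => c * (f (ρ * z) - a)) =
      c * (ρ ^ (n + 1) * coeff (n + 1) (maclaurinSeries f)) := by
  rw [← coeff_rescale, ← maclaurinSeries_comp_mul_left, coeff_maclaurinSeries,
    coeff_maclaurinSeries, iteratedDeriv_succ', iteratedDeriv_succ']
  simp only [deriv_const_mul_field', deriv_sub_const, iteratedDeriv_const_mul_field]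
  exact mul_left_comm _ _ _

theorem exists_isSchwarzMap_dilation {f : ℂ → ℂ} (hf : DifferentiableOn ℂ f (ball 0 1))
    (hf' : deriv f 0 ≠ 0) {ρ : ℝ} (hρ₀ : 0 < ρ) (hρ₁ : ρ < 1) :
    ∃ R : ℝ, 0 < R ∧ IsSchwarzMap fun z => (R * deriv f 0)⁻¹ * (f (ρ * z) - f 0) := by
  obtain ⟨C, hC⟩ := (isCompact_closedBall (0 : ℂ) ρ).exists_bound_of_continuousOn
    ((hf.sub_const (f 0)).continuousOn.mono (closedBall_subset_ball hρ₁))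
  have hC_nonneg : 0 ≤ C := (norm_nonneg _).trans (hC 0 (mem_closedBall_self hρ₀.le))
  have hf'_pos : 0 < ‖deriv f 0‖ := norm_pos_iff.2 hf'
  have hρ : ‖(ρ : ℂ)‖ = ρ := Complex.norm_of_nonneg hρ₀.le
  refine ⟨(C + 1) / ‖deriv f 0‖, by positivity, ((hf.comp (differentiableOn_id.const_mul _)
    fun z hz => mul_mem_ball_zero_one (hρ.trans_le hρ₁.le) hz).sub_const _).const_mul _,
    fun z hz => ?_, by simp⟩
  have hρz : (ρ : ℂ) * z ∈ closedBall (0 : ℂ) ρ := by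
    rw [mem_closedBall_zero_iff, norm_mul, hρ]
    exact mul_le_of_le_one_right hρ₀.le (mem_ball_zero_iff.1 hz).le
  have hR : ‖(((C + 1) / ‖deriv f 0‖ : ℝ) : ℂ) * deriv f 0‖ = C + 1 := by
    rw [norm_mul, Complex.norm_of_nonneg (by positivity), div_mul_cancel₀ _ hf'_pos.ne']
  rw [mem_ball_zero_iff, norm_mul, norm_inv, hR, inv_mul_lt_one₀ (by positivity)]
  exact (hC _ hρz).trans_lt (lt_add_one C)

/-- **De Branges' theorem** (the Bieberbach conjecture). -/
theorem norm_coeff_succ_le_of_injOn {f : ℂ → ℂ} (hf : DifferentiableOn ℂ f (ball 0 1))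
    (hinj : InjOn f (ball 0 1)) (n : ℕ) :
    ‖coeff (n + 1) (maclaurinSeries f)‖ ≤ (n + 1) * ‖deriv f 0‖ := by
  refine le_of_forall_pow_mul_le n fun ρ hρ => ?_
  have hf' : deriv f 0 ≠ 0 := deriv_ne_zero_of_injOn isOpen_ball hf hinj (mem_ball_self one_pos)
  obtain ⟨R, hR, hφ⟩ := exists_isSchwarzMap_dilation hf hf' hρ.1 hρ.2
  have hρ_norm : ‖(ρ : ℂ)‖ = ρ := Complex.norm_of_nonneg hρ.1.le
  have hρ_ne : (ρ : ℂ) ≠ 0 := Complex.ofReal_ne_zero.2 hρ.1.ne'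
  have hR_ne : (R : ℂ) ≠ 0 := Complex.ofReal_ne_zero.2 hR.ne'
  set c : ℂ := (R * deriv f 0)⁻¹ with hc
  have hc_ne : c ≠ 0 := inv_ne_zero (mul_ne_zero hR_ne hf')
  have hφ_inj : InjOn (fun z => c * (f (ρ * z) - f 0)) (ball 0 1) := fun z hz w hw hzw =>
    mul_left_cancel₀ hρ_ne (hinj (mul_mem_ball_zero_one (hρ_norm.trans_le hρ.2.le) hz)
      (mul_mem_ball_zero_one (hρ_norm.trans_le hρ.2.le) hw)
      (sub_left_injective (mul_left_cancel₀ hc_ne hzw)))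
  have hφ_deriv : deriv (fun z => c * (f (ρ * z) - f 0)) 0 = Real.exp (- -Real.log (ρ / R)) := by
    rw [neg_neg, Real.exp_log (div_pos hρ.1 hR), deriv_const_mul_field, deriv_sub_const,
      deriv_comp_mul_left, mul_zero, smul_eq_mul, hc]
    push_cast
    field_simp
  have hle := hφ.norm_coeff_succ_le_of_injOn hφ_inj hφ_deriv n
  rw [coeff_succ_maclaurinSeries_dilation, neg_neg, Real.exp_log (div_pos hρ.1 hR), norm_mul,
    norm_mul, norm_pow, hρ_norm, hc, norm_inv, norm_mul, Complex.norm_of_nonneg hR.le,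
    inv_mul_le_iff₀ (mul_pos hR (norm_pos_iff.2 hf'))] at hle
  refine le_of_mul_le_mul_left (a := ρ) ?_ hρ.1
  calc ρ * (ρ ^ n * ‖coeff (n + 1) (maclaurinSeries f)‖)
      ≤ R * ‖deriv f 0‖ * (ρ / R * (n + 1)) := by rwa [← mul_assoc, ← pow_succ']
    _ = ρ * ((n + 1) * ‖deriv f 0‖) := by field_simp

end DeBrangesTheorem

section BanachHolomorphy

open Filter Topology

theorem exists_forall_ball_subset_mapsTo {α β : Type*} [PseudoMetricSpace α] [PseudoMetricSpace β]
    {U : Set α} (hU : IsOpen U) {f : α → β} (hf : ContinuousOn f U) {x : α} (hx : x ∈ U) :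
    ∃ r > 0, ∀ y ∈ ball x r, ball y r ⊆ U ∧ MapsTo f (ball y r) (closedBall (f y) 1) := by
  have hnear : ∀ᶠ y in 𝓝 x, y ∈ U ∧ f y ∈ ball (f x) (1 / 2) :=
    (hU.eventually_mem hx).and
      ((hf.continuousAt (hU.mem_nhds hx)).eventually_mem (ball_mem_nhds _ one_half_pos))
  obtain ⟨R, hR, hball⟩ := Metric.eventually_nhds_iff_ball.1 hnear
  have hsub : ∀ y ∈ ball x (R / 2), ball y (R / 2) ⊆ ball x R := fun y hy =>
    ball_subset_ball' (by linarith [mem_ball.1 hy])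
  refine ⟨R / 2, half_pos hR, fun y hy => ⟨fun z hz => (hball z (hsub y hy hz)).1, fun z hz => ?_⟩⟩
  have hfy := mem_ball.1 (hball y (hsub y hy (mem_ball_self (half_pos hR)))).2
  have hfz := mem_ball.1 (hball z (hsub y hy hz)).2
  rw [mem_closedBall]
  linarith [dist_triangle_right (f z) (f y) (f x)]
variable {E F G : Type*} [NormedAddCommGroup E] [NormedSpace ℂ E] [NormedAddCommGroup F]
  [NormedSpace ℂ F] [NormedAddCommGroup G] [NormedSpace ℂ G]

theorem uniformCauchySeqOn_fderiv {ι : Type*} {l : Filter ι} {f : ι → E → F} {g : E → F} {x : E}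
    {r : ℝ} (hr : 0 < r) (hfg : TendstoUniformlyOn f g l (ball x (r + r)))
    (hf : ∀ᶠ i in l, DifferentiableOn ℂ (f i) (ball x (r + r))) :
    UniformCauchySeqOn (fun i => fderiv ℂ (f i)) l (ball x r) := by
  rw [SeminormedAddGroup.uniformCauchySeqOn_iff_tendstoUniformlyOn_zero,
    Metric.tendstoUniformlyOn_iff]
  intro ε hε
  have hclose := Metric.tendstoUniformlyOn_iff.1
    (SeminormedAddGroup.uniformCauchySeqOn_iff_tendstoUniformlyOn_zero.1 hfg.uniformCauchySeqOn)
    (ε * r / 4) (by positivity)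
  filter_upwards [hclose, hf.prod_mk hf] with i hi hdiff y hy
  have hsub : ball y r ⊆ ball x (r + r) := ball_subset_ball' (by linarith [mem_ball.1 hy])
  have hyx : y ∈ ball x (r + r) := hsub (mem_ball_self hr)
  have hmaps : MapsTo (f i.1 - f i.2) (ball y r) (closedBall ((f i.1 - f i.2) y) (ε * r / 2)) :=
    fun z hz => by
      have hy_lt := hi y hyx
      have hz_lt := hi z (hsub hz)
      simp only [Pi.zero_apply, dist_zero_left, neg_add_eq_sub, norm_sub_rev (f i.2 _)]
        at hy_lt hz_lt
      rw [mem_closedBall_iff_norm]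
      exact (norm_sub_le _ _).trans (by simp only [Pi.sub_apply]; linarith)
  have hbound := Complex.norm_fderiv_le_div_of_mapsTo_ball
    ((hdiff.1.mono hsub).sub (hdiff.2.mono hsub)) hmaps hr
  have hopen := isOpen_ball.mem_nhds hyx
  rw [fderiv_sub (hdiff.1.differentiableAt hopen) (hdiff.2.differentiableAt hopen)] at hbound
  rw [Pi.zero_apply, dist_zero_left, neg_add_eq_sub, norm_sub_rev]
  refine hbound.trans_lt ?_
  rw [div_lt_iff₀ hr]
  nlinarith [mul_pos hε hr]

theorem differentiableOn_of_tendstoUniformlyOn [CompleteSpace F] {ι : Type*} {l : Filter ι}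
    [l.NeBot] {f : ι → E → F} {g : E → F} {U : Set E} (hU : IsOpen U)
    (hfg : TendstoUniformlyOn f g l U) (hf : ∀ᶠ i in l, DifferentiableOn ℂ (f i) U) :
    DifferentiableOn ℂ g U := by
  intro x hx
  obtain ⟨R, hR, hRU⟩ := Metric.isOpen_iff.1 hU x hx
  have hsub : ball x (R / 2 + R / 2) ⊆ U := by rwa [add_halves]
  have hcauchy := uniformCauchySeqOn_fderiv (half_pos hR) (hfg.mono hsub)
    (hf.mono fun i hi => hi.mono hsub)
  have hlim : ∀ y ∈ ball x (R / 2), ∃ L, Tendsto (fun i => fderiv ℂ (f i) y) l (𝓝 L) :=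
    fun y hy => cauchy_map_iff_exists_tendsto.1 (hcauchy.cauchy_map hy)
  choose! g' hg' using hlim
  have hx_nhds : ball x (R / 2) ∈ 𝓝 x := ball_mem_nhds x (half_pos hR)
  refine (hasFDerivAt_of_tendstoUniformlyOnFilter (f := f) (g' := g')
    ((hcauchy.tendstoUniformlyOn_of_tendsto hg').tendstoUniformlyOnFilter.mono_right
      (le_principal_iff.2 hx_nhds)) ?_ ?_).differentiableAt.differentiableWithinAt
  · filter_upwards [hf.prod_mk (hU.mem_nhds hx)] with p hp
    exact (hp.1.differentiableAt (hU.mem_nhds hp.2)).hasFDerivAt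
  · filter_upwards [hU.mem_nhds hx] with y hy using hfg.tendsto_at hy

theorem tendstoUniformlyOn_slope_fderiv_apply {U : Set E} {f : E → F}
    (hf : DifferentiableOn ℂ f U) {x : E} {r : ℝ} (hr : 0 < r) (hsub : ∀ y ∈ ball x r, ball y r ⊆ U)
    (hmaps : ∀ y ∈ ball x r, MapsTo f (ball y r) (closedBall (f y) 1)) (v : E) :
    TendstoUniformlyOn (fun t : ℂ => fun y => t⁻¹ • (f (y + t • v) - f y))
      (fun y => fderiv ℂ f y v) (𝓝[≠] 0) (ball x r) := by
  rw [Metric.tendstoUniformlyOn_iff]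
  intro ε hε
  have hsmall : ∀ᶠ t : ℂ in 𝓝 0, ‖t • v‖ < r ∧ 2 * 1 * (‖v‖ / r) ^ 2 * ‖t‖ < ε := by
    refine (ContinuousAt.eventually_lt ?_ continuousAt_const (by simpa using hr)).and
      (ContinuousAt.eventually_lt ?_ continuousAt_const (by simpa using hε)) <;> fun_prop
  filter_upwards [hsmall.filter_mono nhdsWithin_le_nhds, self_mem_nhdsWithin] with t ht ht₀ y hy
  have ht_pos : 0 < ‖t‖ := norm_pos_iff.2 ht₀
  have hrem := norm_sub_sub_fderiv_le_of_mapsTo_ball (hf.mono (hsub y hy)) (hmaps y hy)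
    (z := y + t • v) (by simpa [mem_ball_iff_norm] using ht.1)
  have hquot : t⁻¹ • (f (y + t • v) - f y) - fderiv ℂ f y v =
      t⁻¹ • (f (y + t • v) - f y - fderiv ℂ f y (t • v)) := by
    rw [map_smul, smul_sub _ (f (y + t • v) - f y), inv_smul_smul₀ ht₀]
  rw [add_sub_cancel_left] at hrem
  rw [dist_comm, dist_eq_norm, hquot, norm_smul, norm_inv, inv_mul_lt_iff₀ ht_pos]
  calc _ ≤ _ := hrem
    _ = ‖t‖ * (2 * 1 * (‖v‖ / r) ^ 2 * ‖t‖) := by rw [norm_smul]; ring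
    _ < ‖t‖ * ε := by gcongr; exact ht.2

theorem differentiableAt_fderiv_apply [CompleteSpace F] {U : Set E} (hU : IsOpen U) {f : E → F}
    (hf : DifferentiableOn ℂ f U) {x : E} (hx : x ∈ U) (v : E) :
    DifferentiableAt ℂ (fun y => fderiv ℂ f y v) x := by
  obtain ⟨r, hr, hball⟩ := exists_forall_ball_subset_mapsTo hU hf.continuousOn hx
  have hsub := fun y hy => (hball y hy).1
  refine (differentiableOn_of_tendstoUniformlyOn isOpen_ball (tendstoUniformlyOn_slope_fderiv_apply
    hf hr hsub (fun y hy => (hball y hy).2) v) ?_).differentiableAt (ball_mem_nhds x hr)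
  have hsmall : ∀ᶠ t : ℂ in 𝓝 0, ‖t • v‖ < r :=
    ContinuousAt.eventually_lt (by fun_prop) continuousAt_const (by simpa using hr)
  filter_upwards [hsmall.filter_mono nhdsWithin_le_nhds] with t ht
  have hshift : MapsTo (fun y => y + t • v) (ball x r) U := fun y hy =>
    hsub y hy (by simpa [mem_ball_iff_norm] using ht)
  have hid : MapsTo id (ball x r) U := fun y hy => hsub y hy (mem_ball_self hr)
  exact ((hf.comp (differentiableOn_id.add_const _) hshift).sub (hf.mono hid)).const_smul _

theorem differentiableAt_of_forall_apply {T : E → F →L[ℂ] G} {x : E} {r C : ℝ} (hr : 0 < r)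
    (hd : ∀ v, DifferentiableOn ℂ (fun y => T y v) (ball x r)) (hT : ∀ y ∈ ball x r, ‖T y‖ ≤ C) :
    DifferentiableAt ℂ T x := by
  have hx : x ∈ ball x r := mem_ball_self hr
  have hC : 0 ≤ C := (norm_nonneg _).trans (hT x hx)
  have hmaps (v : F) :
      MapsTo (fun y => T y v) (ball x r) (closedBall (T x v) (2 * C * ‖v‖)) := fun y hy => by
    rw [mem_closedBall_iff_norm, two_mul, add_mul]
    exact (norm_sub_le _ _).trans (add_le_add ((T y).le_of_opNorm_le (hT y hy) v)
      ((T x).le_of_opNorm_le (hT x hx) v))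
  have hdx (v : F) : DifferentiableAt ℂ (fun y => T y v) x :=
    (hd v).differentiableAt (ball_mem_nhds x hr)
  let L : F →ₗ[ℂ] E →L[ℂ] G :=
    { toFun := fun v => fderiv ℂ (fun y => T y v) x
      map_add' := fun v w => by
        simp only [map_add]
        exact fderiv_fun_add (hdx v) (hdx w)
      map_smul' := fun c v => by
        simp only [map_smul, RingHom.id_apply]
        exact fderiv_fun_const_smul (hdx v) c }
  let T' : E →L[ℂ] F →L[ℂ] G := (L.mkContinuous (2 * C / r) fun v =>
    (Complex.norm_fderiv_le_div_of_mapsTo_ball (hd v) (hmaps v) hr).trans_eq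
      (mul_div_right_comm _ _ _)).flip
  have hrem : ∀ y ∈ ball x r,
      ‖T y - T x - T' (y - x)‖ ≤ 4 * C / r ^ 2 * ‖y - x‖ ^ 2 := fun y hy =>
    ContinuousLinearMap.opNorm_le_bound _ (by positivity) fun v =>
      (norm_sub_sub_fderiv_le_of_mapsTo_ball (hd v) (hmaps v) hy).trans_eq (by ring)
  refine HasFDerivAt.differentiableAt (f' := T') (.of_isLittleO ?_)
  refine (Asymptotics.IsBigO.of_bound (4 * C / r ^ 2) ?_).trans_isLittleO
    (Asymptotics.isLittleO_pow_sub_sub x one_lt_two)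
  filter_upwards [ball_mem_nhds x hr] with y hy
  simpa only [norm_pow, norm_norm] using hrem y hy

theorem differentiableOn_fderiv [CompleteSpace F] {U : Set E} (hU : IsOpen U) {f : E → F}
    (hf : DifferentiableOn ℂ f U) : DifferentiableOn ℂ (fderiv ℂ f) U := fun x hx => by
  obtain ⟨r, hr, hball⟩ := exists_forall_ball_subset_mapsTo hU hf.continuousOn hx
  refine (differentiableAt_of_forall_apply hr (C := 1 / r) (fun v y hy =>
    (differentiableAt_fderiv_apply hU hf ((hball y hy).1 (mem_ball_self hr)) v)
      |>.differentiableWithinAt) fun y hy => ?_).differentiableWithinAt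
  exact Complex.norm_fderiv_le_div_of_mapsTo_ball (hf.mono (hball y hy).1) (hball y hy).2 hr

universe u v

-- `fderiv` moves the target into the larger universe, where the induction can then stay.
theorem contDiffOn_nat_of_differentiableOn_max (n : ℕ) {E : Type u} [NormedAddCommGroup E]
    [NormedSpace ℂ E] {F : Type (max u v)} [NormedAddCommGroup F] [NormedSpace ℂ F]
    [CompleteSpace F] {U : Set E} (hU : IsOpen U) {f : E → F} (hf : DifferentiableOn ℂ f U) :
    ContDiffOn ℂ n f U := by
  induction n generalizing F with
  | zero => exact contDiffOn_zero.2 hf.continuousOn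
  | succ n ih =>
    push_cast
    exact (contDiffOn_succ_iff_fderiv_of_isOpen hU).2
      ⟨hf, by simp, ih (differentiableOn_fderiv hU hf)⟩

theorem contDiffOn_nat_of_differentiableOn (n : ℕ) {E : Type u} [NormedAddCommGroup E]
    [NormedSpace ℂ E] {F : Type v} [NormedAddCommGroup F] [NormedSpace ℂ F] [CompleteSpace F]
    {U : Set E} (hU : IsOpen U) {f : E → F} (hf : DifferentiableOn ℂ f U) :
    ContDiffOn ℂ n f U := by
  suffices h : ContDiffOn ℂ (n + 1) f U from h.of_le le_self_add
  exact (contDiffOn_succ_iff_fderiv_of_isOpen hU).2 ⟨hf, by simp,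
    contDiffOn_nat_of_differentiableOn_max.{u, v} n hU (differentiableOn_fderiv hU hf)⟩

theorem iteratedFDeriv_apply_const_eq_iteratedDeriv {s : ℕ} {U : Set E} (hU : IsOpen U)
    {f : E → F} (hf : ContDiffOn ℂ s f U) (h₀ : 0 ∈ U) (w : E) :
    iteratedFDeriv ℂ s f 0 (fun _ => w) = iteratedDeriv s (fun ζ : ℂ => f (ζ • w)) 0 := by
  let g : ℂ →L[ℂ] E := ContinuousLinearMap.toSpanSingleton ℂ w
  have hg₀ : g 0 ∈ U := by rwa [map_zero]
  have hV : IsOpen (g ⁻¹' U) := hU.preimage g.continuous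
  have hcomp := g.iteratedFDerivWithin_comp_right hf hU.uniqueDiffOn hV.uniqueDiffOn hg₀ le_rfl
  rw [iteratedFDerivWithin_of_isOpen _ hV hg₀, iteratedFDerivWithin_of_isOpen _ hU hg₀] at hcomp
  rw [iteratedDeriv_eq_iteratedFDeriv]
  change _ = iteratedFDeriv ℂ s (f ∘ g) 0 _
  rw [hcomp]
  simp [g]

end BanachHolomorphy

section ScalarMultiples

variable {X : Type*} [NormedAddCommGroup X] [NormedSpace ℂ X] {f : X → ℂ} {w : X}

theorem smul_mem_ball_zero_one {ζ : ℂ} (hζ : ζ ∈ ball 0 1) (hw : ‖w‖ = 1) :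
    ζ • w ∈ ball (0 : X) 1 := by
  simpa [norm_smul, hw] using hζ

theorem differentiableOn_slice (hf : DifferentiableOn ℂ f (ball 0 1)) (hw : ‖w‖ = 1) :
    DifferentiableOn ℂ (fun ζ : ℂ => f (ζ • w)) (ball 0 1) :=
  hf.comp (differentiableOn_id.smul_const w) fun _ hζ => smul_mem_ball_zero_one hζ hw

theorem differentiableOn_mul_slice (hf : DifferentiableOn ℂ f (ball 0 1)) (hw : ‖w‖ = 1) :
    DifferentiableOn ℂ (fun ζ : ℂ => ζ * f (ζ • w)) (ball 0 1) :=
  differentiableOn_id.mul (differentiableOn_slice hf hw)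

theorem injOn_mul_slice (hinj : InjOn (fun x => f x • x) (ball 0 1)) (hw : ‖w‖ = 1) :
    InjOn (fun ζ : ℂ => ζ * f (ζ • w)) (ball 0 1) := fun a ha b hb hab => by
  have hw₀ : w ≠ 0 := norm_ne_zero_iff.1 (hw.trans_ne one_ne_zero)
  refine smul_left_injective ℂ hw₀
    (hinj (smul_mem_ball_zero_one ha hw) (smul_mem_ball_zero_one hb hw) ?_)
  simpa only [smul_smul, mul_comm] using congrArg (· • w) hab

theorem deriv_mul_slice_zero (hf : DifferentiableOn ℂ f (ball 0 1)) (hw : ‖w‖ = 1) :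
    deriv (fun ζ : ℂ => ζ * f (ζ • w)) 0 = f 0 := by
  have hslice := (differentiableOn_slice hf hw).differentiableAt (ball_mem_nhds 0 one_pos)
  simpa using ((hasDerivAt_id' (0 : ℂ)).fun_mul hslice.hasDerivAt).deriv

theorem iteratedFDeriv_smul_self_apply_const (hf : DifferentiableOn ℂ f (ball 0 1))
    (hw : ‖w‖ = 1) (s : ℕ) : iteratedFDeriv ℂ s (fun x => f x • x) 0 (fun _ => w) =
      iteratedDeriv s (fun ζ : ℂ => ζ * f (ζ • w)) 0 • w := by
  have hcont : ContDiffOn ℂ s (fun x => f x • x) (ball 0 1) :=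
    (contDiffOn_nat_of_differentiableOn s isOpen_ball hf).smul contDiffOn_id
  rw [iteratedFDeriv_apply_const_eq_iteratedDeriv isOpen_ball hcont (mem_ball_self one_pos)]
  have hslice := (differentiableOn_mul_slice hf hw).analyticAt (ball_mem_nhds 0 one_pos)
  simp only [← iteratedDeriv_smul_const hslice.contDiffAt, smul_smul, mul_comm]

end ScalarMultiples

theorem stmt4_general {X : Type*} [NormedAddCommGroup X] [NormedSpace ℂ X] {f : X → ℂ}
    (hf : DifferentiableOn ℂ f (ball 0 1)) {F : X → X} (hF : ∀ x ∈ ball 0 1, F x = f x • x)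
    (hinj : InjOn F (ball 0 1)) {w : X} (hw : ‖w‖ = 1) (s : ℕ) :
    ‖(s.factorial : ℂ)⁻¹ • iteratedFDeriv ℂ s F 0 (fun _ => w)‖ ≤ s * ‖f 0‖ := by
  have hFf : F =ᶠ[nhds 0] fun x => f x • x :=
    Filter.eventually_of_mem (ball_mem_nhds 0 one_pos) hF
  rw [(hFf.iteratedFDeriv ℂ s).eq_of_nhds, iteratedFDeriv_smul_self_apply_const hf hw, smul_smul,
    norm_smul, hw, mul_one]
  cases s with
  | zero => simp
  | succ n =>
    have hdebranges := norm_coeff_succ_le_of_injOn (differentiableOn_mul_slice hf hw)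
      (injOn_mul_slice (hinj.congr hF) hw) n
    rwa [coeff_maclaurinSeries, deriv_mul_slice_zero hf hw, ← Nat.cast_succ] at hdebranges

/-- **Bieberbach conjecture** for normalized biholomorphic mappings of the form
`F(x) = f(x)·x` on the unit ball `𝔹` of a complex Banach space: if `F(0) = 0` and
`DF(0) = I` (equivalently `f(0) = 1`) and `F` is biholomorphic on `𝔹`, then for every
`s ≥ 1` and every `w` with `‖w‖ = 1`, `‖(1/s!)·DˢF(0)(w,…,w)‖ ≤ s`. -/
theorem stmt4 {X : Type*} [NormedAddCommGroup X] [NormedSpace ℂ X] [CompleteSpace X]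
    (f : X → ℂ) (hf : DifferentiableOn ℂ f (ball (0 : X) 1)) (hf0 : f 0 = 1)
    (F : X → X) (hF : ∀ x ∈ ball (0 : X) 1, F x = f x • x)
    (hF0 : F 0 = 0) (hDF0 : fderiv ℂ F 0 = ContinuousLinearMap.id ℂ X)
    (hbi : IsBiholoOn F (ball (0 : X) 1)) :
    ∀ s : ℕ, 1 ≤ s → ∀ w : X, ‖w‖ = 1 →
      ‖((s.factorial : ℂ))⁻¹ • iteratedFDeriv ℂ s F 0 (fun _ => w)‖ ≤ s := by
  intro s _ w hw
  simpa [hf0] using stmt4_general hf hF hbi.2.1 hw s
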